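/- arXiv:2004.11049 — 11 statements merged into one kernel-verified Lean document; each statement's English description precedes it below -/
import Mathlib

section
/- For every j ∈ ℕ and every x ∈ (0, π/2), the function e_j satisfies the eigenvalue equation of the operator governing linearized perturbations of the AdS solution: the derivative of x ↦ tan²(x)·e_j'(x) equals −ω_j²·tan²(x)·e_j(x); equivalently, −(1/tan²(x))·d/dx(tan²(x)·d/dx e_j(x)) = ω_j²·e_j(x). -/
open Real MeasureTheory

/-- The AdS linearized eigenvalue `ω_j = 2j + 3`. -/
noncomputable def ω (j : ℕ) : ℝ := 2 * j + 3

/-- The AdS linearized eigenfunction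
`e_j(x) = (2/√π)·(ω_j² − 1)^(−1/2)·(ω_j·sin(ω_j x)/tan x − cos(ω_j x))`. -/
noncomputable def e (j : ℕ) (x : ℝ) : ℝ :=
  (2 / Real.sqrt Real.pi) * (Real.sqrt (ω j ^ 2 - 1))⁻¹ *
    (ω j * Real.sin (ω j * x) / Real.tan x - Real.cos (ω j * x))

/-- The derivative of the AdS linearized eigenfunction,
`e_j'(x) = (2/√π)·ω_j·(ω_j² − 1)^(−1/2)·(ω_j·cos(ω_j x)/tan x − sin(ω_j x)/tan² x)`. -/
noncomputable def e' (j : ℕ) (x : ℝ) : ℝ :=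
  (2 / Real.sqrt Real.pi) * ω j * (Real.sqrt (ω j ^ 2 - 1))⁻¹ *
    (ω j * Real.cos (ω j * x) / Real.tan x - Real.sin (ω j * x) / Real.tan x ^ 2)

/-- For every `j ∈ ℕ` and `x ∈ (0, π/2)`, the function `e_j` satisfies the eigenvalue
equation of the AdS linearized operator: the derivative of `x ↦ tan²(x)·e_j'(x)` equals
`−ω_j²·tan²(x)·e_j(x)`. -/
theorem ads_eigenfunction_eigenvalue_equation (j : ℕ) (x : ℝ)
    (hx : x ∈ Set.Ioo 0 (Real.pi / 2)) :
    HasDerivAt (fun y => Real.tan y ^ 2 * e' j y)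
      (-(ω j ^ 2 * Real.tan x ^ 2 * e j x)) x := by
  have hc : Real.cos x ≠ 0 :=
    (Real.cos_pos_of_mem_Ioo ⟨by linarith [hx.1, Real.pi_pos], hx.2⟩).ne'
  have ht : Real.tan x ≠ 0 := (Real.tan_pos_of_pos_of_lt_pi_div_two hx.1 hx.2).ne'
  have hlin : HasDerivAt (fun y : ℝ => ω j * y) (ω j) x := by
    simpa using (hasDerivAt_id x).const_mul (ω j)
  have hT := Real.hasDerivAt_tan hc
  have hmain := ((((hlin.cos.const_mul (ω j)).mul hT).sub hlin.sin).const_mul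
    ((2 / Real.sqrt Real.pi) * ω j * (Real.sqrt (ω j ^ 2 - 1))⁻¹))
  have hsec : 1 / Real.cos x ^ 2 = 1 + Real.tan x ^ 2 := by
    rw [Real.tan_eq_sin_div_cos]
    field_simp
    linarith [Real.sin_sq_add_cos_sq x]
  have hev : (fun y => Real.tan y ^ 2 * e' j y) =ᶠ[nhds x] fun y =>
      (2 / Real.sqrt Real.pi) * ω j * (Real.sqrt (ω j ^ 2 - 1))⁻¹ *
        (ω j * Real.cos (ω j * y) * Real.tan y - Real.sin (ω j * y)) := by
    filter_upwards [isOpen_Ioo.mem_nhds hx] with y hy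
    have hty : Real.tan y ≠ 0 := (Real.tan_pos_of_pos_of_lt_pi_div_two hy.1 hy.2).ne'
    have h : Real.tan y ^ 2 * (ω j * Real.cos (ω j * y) / Real.tan y
        - Real.sin (ω j * y) / Real.tan y ^ 2)
        = ω j * Real.cos (ω j * y) * Real.tan y - Real.sin (ω j * y) := by
      field_simp
    rw [← h]
    unfold e'
    ring
  refine HasDerivAt.congr_of_eventuallyEq ?_ hev
  refine hmain.congr_deriv ?_
  have h2 : Real.tan x ^ 2 * (ω j * Real.sin (ω j * x) / Real.tan x - Real.cos (ω j * x))
      = ω j * Real.sin (ω j * x) * Real.tan x - Real.tan x ^ 2 * Real.cos (ω j * x) := by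
    field_simp
  rw [hsec]
  unfold e
  linear_combination (ω j ^ 2 * ((2 / Real.sqrt Real.pi) * (Real.sqrt (ω j ^ 2 - 1))⁻¹)) * h2
end

section
/- For all i, j ∈ ℕ, ∫₀^{π/2} e_i(x)·e_j(x)·tan²(x) dx = δ_{ij}, i.e. the family {e_j} is orthonormal with respect to the weighted inner product (f|g) = ∫₀^{π/2} f(x)g(x)tan²(x) dx. -/
open Real MeasureTheory

lemma cos_factor (n : ℕ) : ∃ q : ℝ → ℝ, ContDiff ℝ 1 q ∧
    ∀ x, Real.cos ((2 * n + 1) * x) = Real.cos x * q x := by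
  induction n with
  | zero => exact ⟨fun _ => 1, contDiff_const, fun x => by simp⟩
  | succ n ih =>
    obtain ⟨q, hq, h⟩ := ih
    refine ⟨fun x => q x * Real.cos (2 * x) - 2 * Real.sin ((2 * n + 1) * x) * Real.sin x,
      by fun_prop, fun x => ?_⟩
    have : ((2 * ((n + 1 : ℕ) : ℝ) + 1) * x) = (2 * n + 1) * x + 2 * x := by push_cast; ring
    rw [this, Real.cos_add, h, Real.sin_two_mul]
    ring

lemma int_cos_nat (n : ℤ) (hn : n ≠ 0) :
    ∫ x in (0 : ℝ)..(Real.pi / 2), Real.cos ((2 * n : ℝ) * x) = 0 := by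
  have hn' : (2 * n : ℝ) ≠ 0 := by
    have : (n : ℝ) ≠ 0 := by exact_mod_cast hn
    positivity
  rw [intervalIntegral.integral_comp_mul_left (fun x => Real.cos x) hn', integral_cos]
  have : (2 * n : ℝ) * (Real.pi / 2) = n * Real.pi := by ring
  rw [this, Real.sin_int_mul_pi]
  simp

lemma main_part (i j : ℕ) :
    ∫ x in (0 : ℝ)..(Real.pi / 2), (ω i * ω j * (Real.sin (ω i * x) * Real.sin (ω j * x))
      - Real.cos (ω i * x) * Real.cos (ω j * x)) =
      if i = j then (ω i ^ 2 - 1) * (Real.pi / 4) else 0 := by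
  have h : ∀ x : ℝ, (ω i * ω j * (Real.sin (ω i * x) * Real.sin (ω j * x))
      - Real.cos (ω i * x) * Real.cos (ω j * x)) =
      (ω i * ω j - 1) / 2 * Real.cos ((2 * ((i - j : ℤ) : ℤ) : ℝ) * x)
      - (ω i * ω j + 1) / 2 * Real.cos ((2 * ((i + j + 3 : ℤ) : ℤ) : ℝ) * x) := by
    intro x
    have h1 : (2 * ((i - j : ℤ) : ℝ)) * x = ω i * x - ω j * x := by
      unfold ω; push_cast; ring
    have h2 : (2 * ((i + j + 3 : ℤ) : ℝ)) * x = ω i * x + ω j * x := by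
      unfold ω; push_cast; ring
    rw [h1, h2, Real.cos_add, Real.cos_sub]
    ring
  simp_rw [h]
  rw [intervalIntegral.integral_sub (Continuous.intervalIntegrable (by fun_prop) _ _)
    (Continuous.intervalIntegrable (by fun_prop) _ _),
    intervalIntegral.integral_const_mul, intervalIntegral.integral_const_mul,
    int_cos_nat (i + j + 3) (by positivity)]
  split_ifs with hij
  · subst hij
    simp
    ring
  · rw [int_cos_nat (i - j) (by omega)]
    simp

theorem ads_eigenfunctions_orthonormal (i j : ℕ) :
    (∫ x in Set.Ioo (0 : ℝ) (Real.pi / 2), e i x * e j x * Real.tan x ^ 2) =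
      if i = j then 1 else 0 := by
  obtain ⟨q, hq, hqc⟩ := cos_factor (i + 1)
  have hqc' : ∀ x, Real.cos (ω i * x) = Real.cos x * q x := by
    intro x; rw [← hqc]; unfold ω; push_cast; ring_nf
  set G : ℝ → ℝ := fun x => Real.sin x * q x * Real.cos (ω j * x) with hG
  have hGc : ContDiff ℝ 1 G := by rw [hG]; fun_prop
  have hG' : Continuous (deriv G) := hGc.continuous_deriv le_rfl
  set C : ℝ := (2 / Real.sqrt Real.pi) ^ 2 * (Real.sqrt (ω i ^ 2 - 1))⁻¹ *
    (Real.sqrt (ω j ^ 2 - 1))⁻¹ with hC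
  have key : ∀ x ∈ Set.Ioo (0 : ℝ) (Real.pi / 2), e i x * e j x * Real.tan x ^ 2 =
      C * ((ω i * ω j * (Real.sin (ω i * x) * Real.sin (ω j * x))
      - Real.cos (ω i * x) * Real.cos (ω j * x)) + deriv G x) := by
    intro x hx
    have hc : Real.cos x ≠ 0 :=
      (Real.cos_pos_of_mem_Ioo ⟨by linarith [hx.1, Real.pi_pos], hx.2⟩).ne'
    have hs : Real.sin x ≠ 0 :=
      (Real.sin_pos_of_pos_of_lt_pi hx.1 (by linarith [hx.2, Real.pi_pos])).ne'
    have hd : deriv G x = 1 / Real.cos x ^ 2 * (Real.cos (ω i * x) * Real.cos (ω j * x)) +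
        Real.tan x * ((-Real.sin (ω i * x) * (ω i * 1)) * Real.cos (ω j * x) +
          Real.cos (ω i * x) * (-Real.sin (ω j * x) * (ω j * 1))) := by
      have hev : G =ᶠ[nhds x]
          (fun y => Real.tan y * (Real.cos (ω i * y) * Real.cos (ω j * y))) := by
        filter_upwards [Real.continuous_cos.continuousAt.eventually_ne hc] with y hy
        rw [hG, hqc', Real.tan_eq_sin_div_cos]
        field_simp
      rw [hev.deriv_eq]
      exact ((Real.hasDerivAt_tan hc).mul
        (((hasDerivAt_id x).const_mul (ω i)).cos.mul
          ((hasDerivAt_id x).const_mul (ω j)).cos)).deriv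
    rw [hd, hC]
    unfold e
    rw [Real.tan_eq_sin_div_cos]
    have h2 : Real.sin x ^ 2 = 1 - Real.cos x ^ 2 := Real.sin_sq x
    generalize (Real.sqrt (ω i ^ 2 - 1))⁻¹ = A
    generalize (Real.sqrt (ω j ^ 2 - 1))⁻¹ = B
    generalize 2 / Real.sqrt Real.pi = D
    generalize Real.cos (ω i * x) = ci
    generalize Real.cos (ω j * x) = cj
    generalize Real.sin (ω i * x) = si
    generalize Real.sin (ω j * x) = sj
    field_simp
    linear_combination (D ^ 2 * A * B * ci * cj) * h2
  rw [setIntegral_congr_fun measurableSet_Ioo key, ← integral_Ioc_eq_integral_Ioo,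
    ← intervalIntegral.integral_of_le (by positivity), intervalIntegral.integral_const_mul,
    intervalIntegral.integral_add (Continuous.intervalIntegrable (by fun_prop) _ _)
      (hG'.intervalIntegrable _ _), main_part,
    intervalIntegral.integral_deriv_eq_sub
      (fun x _ => (hGc.differentiable (by norm_num)).differentiableAt)
      (hG'.intervalIntegrable _ _)]
  have hb : Real.cos (ω j * (Real.pi / 2)) = 0 := by
    obtain ⟨r, _, hr⟩ := cos_factor (j + 1)
    have := hr (Real.pi / 2)
    rw [Real.cos_pi_div_two, zero_mul] at this
    rw [← this]; unfold ω; push_cast; ring_nf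
  have hG1 : G (Real.pi / 2) = 0 := by simp only [hG, hb, mul_zero]
  have hG0 : G 0 = 0 := by simp [hG]
  rw [hG1, hG0]
  split_ifs with hij
  · subst hij
    have hp : 0 < ω i ^ 2 - 1 := by
      have : (0 : ℝ) ≤ i := Nat.cast_nonneg i
      unfold ω; nlinarith
    have h1 := Real.sq_sqrt hp.le
    have h2 := Real.sq_sqrt Real.pi_pos.le
    have h3 := (Real.sqrt_pos.2 hp).ne'
    have h4 := (Real.sqrt_pos.2 Real.pi_pos).ne'
    have h5 : C = 4 / Real.pi / (ω i ^ 2 - 1) := by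
      rw [hC, div_pow, h2, mul_assoc, ← mul_inv, ← sq, h1]
      ring
    rw [h5]
    have := hp.ne'
    have := Real.pi_ne_zero
    field_simp
    ring
  · ring
end

section
/- For all i, j ∈ ℕ, ∫₀^{π/2} e_i'(x)·e_j'(x)·tan²(x) dx = ω_i²·δ_{ij}; in particular the family {e_j'/ω_j} is orthonormal with respect to the weighted inner product (f|g) = ∫₀^{π/2} f(x)g(x)tan²(x) dx. -/
open Real MeasureTheory

theorem ads_aux_T (i j : ℕ) : ∃ T : ℝ → ℝ, (∀ x, HasDerivAt T (Real.cos ((ω i - ω j) * x)) x) ∧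
    T 0 = 0 ∧ T (Real.pi / 2) = (Real.pi / 2) * (if i = j then 1 else 0) := by
  by_cases h : i = j
  · subst h
    refine ⟨fun x => x, fun x => ?_, rfl, by simp⟩
    simpa using hasDerivAt_id' x
  · have hne : ω i - ω j ≠ 0 := by
      unfold ω
      intro h2
      apply h
      have : (i : ℝ) = j := by linarith
      exact_mod_cast this
    refine ⟨fun x => Real.sin ((ω i - ω j) * x) / (ω i - ω j), fun x => ?_, by simp, ?_⟩
    · have h1 := ((hasDerivAt_id' x).const_mul (ω i - ω j)).sin.div_const (ω i - ω j)
      refine h1.congr_deriv ?_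
      field_simp
    · have : (ω i - ω j) * (Real.pi / 2) = ((i - j : ℤ) : ℝ) * Real.pi := by
        unfold ω; push_cast; ring
      simp only [this, Real.sin_int_mul_pi, if_neg h]
      simp

theorem ads_aux_P (i : ℕ) : ∃ P : ℝ → ℝ, Continuous P ∧
    ∀ x, Real.sin (ω i * x) = P x * Real.sin x := by
  refine ⟨fun x => (Polynomial.Chebyshev.U ℝ ((2 * i + 2 : ℕ) : ℤ)).eval (Real.cos x), ?_, fun x => ?_⟩
  · fun_prop
  · rw [Polynomial.Chebyshev.U_real_cos]
    congr 1
    unfold ω; push_cast; ring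

theorem ads_aux_int (i j : ℕ) :
    (∫ x in Set.Ioo (0 : ℝ) (Real.pi / 2),
      (ω i * Real.cos (ω i * x) - Real.sin (ω i * x) * Real.cos x / Real.sin x) *
      (ω j * Real.cos (ω j * x) - Real.sin (ω j * x) * Real.cos x / Real.sin x)) =
      (ω i * ω j - 1) / 2 * ((Real.pi / 2) * (if i = j then 1 else 0)) := by
  obtain ⟨T, hT, hT0, hT1⟩ := ads_aux_T i j
  obtain ⟨P, hPc, hP⟩ := ads_aux_P i
  obtain ⟨Q, hQc, hQ⟩ := ads_aux_P j
  have hab : ω i + ω j ≠ 0 := by unfold ω; positivity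
  have hpi : (0 : ℝ) ≤ Real.pi / 2 := by positivity
  have hsin : ∀ x ∈ Set.Ioo (0 : ℝ) (Real.pi / 2), Real.sin x ≠ 0 := fun x hx =>
    (Real.sin_pos_of_pos_of_lt_pi hx.1 (by linarith [hx.2, Real.pi_pos])).ne'
  have hTc : Continuous T := continuous_iff_continuousAt.2 fun x => (hT x).continuousAt
  set g : ℝ → ℝ := fun x => (ω i * Real.cos (ω i * x) - P x * Real.cos x) *
      (ω j * Real.cos (ω j * x) - Q x * Real.cos x) with hg
  have hgc : Continuous g := by fun_prop
  rw [setIntegral_congr_fun (g := g) measurableSet_Ioo, ← integral_Ioc_eq_integral_Ioo,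
    ← intervalIntegral.integral_of_le hpi]
  · set F : ℝ → ℝ := fun x => (ω i * ω j - 1) / 2 * T x +
      (ω i * ω j + 1) / (2 * (ω i + ω j)) * Real.sin ((ω i + ω j) * x) -
      P x * Real.sin (ω j * x) * Real.cos x with hF
    rw [intervalIntegral.integral_eq_sub_of_hasDerivAt_of_le (f := F) hpi
      (by fun_prop) _ (hgc.intervalIntegrable _ _)]
    · have : (ω i + ω j) * (Real.pi / 2) = ((i + j + 3 : ℕ) : ℝ) * Real.pi := by
        unfold ω; push_cast; ring
      simp only [hF, hT0, hT1, this, Real.sin_nat_mul_pi]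
      simp
    · intro x hx
      have hs := hsin x hx
      have ha := ((hasDerivAt_id' x).const_mul (ω i)).sin
      have hb := ((hasDerivAt_id' x).const_mul (ω j)).sin
      have hc := ((hasDerivAt_id' x).const_mul (ω i + ω j)).sin
      have hG := ((ha.mul hb).mul (Real.hasDerivAt_cos x)).div (Real.hasDerivAt_sin x) hs
      have hA := (((hT x).const_mul ((ω i * ω j - 1) / 2)).add
        (hc.const_mul ((ω i * ω j + 1) / (2 * (ω i + ω j))))).sub hG
      refine (hA.congr_of_eventuallyEq ?_).congr_deriv ?_
      · filter_upwards [isOpen_Ioo.mem_nhds hx] with y hy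
        have hs := hsin y hy
        simp only [hF, Pi.add_apply, Pi.sub_apply, Pi.mul_apply, Pi.div_apply, hP y]
        field_simp
      · have e1 : P x = Real.sin (ω i * x) / Real.sin x := by rw [hP x]; field_simp
        have e2 : Q x = Real.sin (ω j * x) / Real.sin x := by rw [hQ x]; field_simp
        simp only [hg, e1, e2, Pi.mul_apply, sub_mul, add_mul (ω i), Real.cos_add, Real.cos_sub]
        have hsq := Real.sin_sq_add_cos_sq x
        field_simp
        have hsq' : Real.cos x ^ 2 = 1 - Real.sin x ^ 2 := by linarith
        ring_nf
  · intro x hx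
    have hs := hsin x hx
    simp only [hg, hP x, hQ x]
    field_simp

theorem ads_eigenfunction_derivatives_orthogonal (i j : ℕ) :
    (∫ x in Set.Ioo (0 : ℝ) (Real.pi / 2), e' i x * e' j x * Real.tan x ^ 2) =
      ω i ^ 2 * (if i = j then 1 else 0) := by
  have key : ∀ x ∈ Set.Ioo (0 : ℝ) (Real.pi / 2), e' i x * e' j x * Real.tan x ^ 2 =
      ((2 / Real.sqrt Real.pi) * ω i * (Real.sqrt (ω i ^ 2 - 1))⁻¹ *
       ((2 / Real.sqrt Real.pi) * ω j * (Real.sqrt (ω j ^ 2 - 1))⁻¹)) *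
      ((ω i * Real.cos (ω i * x) - Real.sin (ω i * x) * Real.cos x / Real.sin x) *
      (ω j * Real.cos (ω j * x) - Real.sin (ω j * x) * Real.cos x / Real.sin x)) := by
    intro x hx
    have hs : Real.sin x ≠ 0 :=
      (Real.sin_pos_of_pos_of_lt_pi hx.1 (by linarith [hx.2, Real.pi_pos])).ne'
    have hc : Real.cos x ≠ 0 :=
      (Real.cos_pos_of_mem_Ioo ⟨by linarith [hx.1, Real.pi_pos], hx.2⟩).ne'
    have h : ∀ A B C D k l : ℝ, (k * (A / Real.tan x - B / Real.tan x ^ 2)) *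
        (l * (C / Real.tan x - D / Real.tan x ^ 2)) * Real.tan x ^ 2 =
        (k * l) * ((A - B * Real.cos x / Real.sin x) * (C - D * Real.cos x / Real.sin x)) := by
      intro A B C D k l
      rw [Real.tan_eq_sin_div_cos]
      field_simp
    unfold e'
    exact h _ _ _ _ _ _
  rw [setIntegral_congr_fun measurableSet_Ioo key, integral_const_mul, ads_aux_int]
  by_cases h : i = j
  · subst h
    have h1 : 0 < ω i ^ 2 - 1 := by
      have : (0 : ℝ) ≤ i := Nat.cast_nonneg i
      unfold ω; nlinarith
    have e1 := Real.sq_sqrt h1.le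
    have e2 := Real.sq_sqrt Real.pi_pos.le
    have p1 := (Real.sqrt_pos.2 h1).ne'
    have p2 := (Real.sqrt_pos.2 Real.pi_pos).ne'
    simp only [if_true, mul_one]
    field_simp
    rw [e1, e2]
    ring
  · simp [h]
end

section
/- For every m ∈ ℕ, ∫₀^{π/2} e_m(x)·tan²(x) dx = (2/√π)·((−1)^m/ω_m)·√(ω_m² − 1). -/
open Real MeasureTheory

noncomputable def adsP : ℕ → ℝ → ℝ
  | 0 => fun _ => 1
  | (n + 1) => fun x => 2 * Real.cos ((2 * n + 2) * x) - adsP n x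

lemma adsP_contDiff (n : ℕ) : ContDiff ℝ 1 (adsP n) := by
  induction n with
  | zero => exact contDiff_const
  | succ n ih =>
    have h : ContDiff ℝ 1 (fun x : ℝ => 2 * Real.cos ((2 * n + 2) * x)) := by fun_prop
    exact h.sub ih

lemma adsP_mul (n : ℕ) (x : ℝ) : adsP n x * Real.cos x = Real.cos ((2 * n + 1) * x) := by
  induction n with
  | zero => simp [adsP]
  | succ n ih =>
    have h : adsP (n + 1) x = 2 * Real.cos ((2 * n + 2) * x) - adsP n x := rfl
    rw [h, sub_mul, ih]
    push_cast
    rw [show (2 * ((n : ℝ) + 1) + 1) * x = (2 * n + 2) * x + x by ring,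
      show (2 * (n : ℝ) + 1) * x = (2 * n + 2) * x - x by ring, Real.cos_add, Real.cos_sub]
    ring

lemma adsP_pi (n : ℕ) : adsP n (Real.pi / 2) = (-1) ^ n * (2 * n + 1) := by
  induction n with
  | zero => simp [adsP]
  | succ n ih =>
    have h : adsP (n + 1) (Real.pi / 2)
      = 2 * Real.cos ((2 * n + 2) * (Real.pi / 2)) - adsP n (Real.pi / 2) := rfl
    have h2 : Real.cos (((n + 1 : ℕ) : ℝ) * Real.pi) = (-1) ^ (n + 1) := Real.cos_nat_mul_pi _
    rw [h, ih, show (2 * (n : ℝ) + 2) * (Real.pi / 2) = ((n + 1 : ℕ) : ℝ) * Real.pi by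
      push_cast; ring, h2]
    push_cast
    ring

/-- For every `m ∈ ℕ`, `∫₀^{π/2} e_m(x)·tan²(x) dx = (2/√π)·((−1)^m/ω_m)·√(ω_m² − 1)`. -/
theorem ads_eigenfunction_integral_against_one (m : ℕ) :
    (∫ x in Set.Ioo (0 : ℝ) (Real.pi / 2), e m x * Real.tan x ^ 2) =
      (2 / Real.sqrt Real.pi) * ((-1 : ℝ) ^ m / ω m) * Real.sqrt (ω m ^ 2 - 1) := by
  have hw : ω m = 2 * ((m + 1 : ℕ) : ℝ) + 1 := by unfold ω; push_cast; ring
  have hwpos : 3 ≤ ω m := by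
    have : (0 : ℝ) ≤ m := Nat.cast_nonneg m
    unfold ω; linarith
  have hw0 : ω m ≠ 0 := by linarith
  set w := ω m with hwdef
  set C : ℝ := (2 / Real.sqrt Real.pi) * (Real.sqrt (w ^ 2 - 1))⁻¹ with hC
  set F : ℝ → ℝ := fun x => C * (Real.sin (w * x) / w - adsP (m + 1) x * Real.sin x) with hF
  have hFc : ContDiff ℝ 1 F := by
    have h0 := adsP_contDiff (m + 1)
    rw [hF]
    fun_prop
  have key : ∀ x ∈ Set.Ioo (0 : ℝ) (Real.pi / 2), e m x * Real.tan x ^ 2 = deriv F x := by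
    intro x hx
    have hcos : ∀ y ∈ Set.Ioo (0 : ℝ) (Real.pi / 2), 0 < Real.cos y := fun y hy =>
      Real.cos_pos_of_mem_Ioo ⟨by linarith [hy.1, Real.pi_pos], hy.2⟩
    have hc := hcos x hx
    have hs : 0 < Real.sin x := Real.sin_pos_of_pos_of_lt_pi hx.1 (by linarith [hx.2, Real.pi_pos])
    have hev : F =ᶠ[nhds x] fun y => C * (Real.sin (w * y) / w - Real.cos (w * y) * Real.tan y) := by
      filter_upwards [isOpen_Ioo.mem_nhds hx] with y hy
      have := (hcos y hy).ne'
      have h1 := adsP_mul (m + 1) y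
      rw [← hw] at h1
      simp only [hF]
      rw [← h1, Real.tan_eq_sin_div_cos]
      field_simp
    rw [hev.deriv_eq]
    have hl : HasDerivAt (fun y : ℝ => w * y) w x := by
      simpa using (hasDerivAt_id x).const_mul w
    have hd := ((hl.sin.div_const w).sub (hl.cos.mul (Real.hasDerivAt_tan hc.ne'))).const_mul C
    refine Eq.trans ?_ hd.deriv.symm
    unfold e
    rw [← hwdef, ← hC, Real.tan_eq_sin_div_cos]
    have hsc := Real.sin_sq_add_cos_sq x
    field_simp
    have : Real.cos x ^ 2 = 1 - Real.sin x ^ 2 := by linarith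
    linear_combination (-C * Real.cos (w * x)) * hsc
  rw [setIntegral_congr_fun measurableSet_Ioo key, ← integral_Ioc_eq_integral_Ioo,
    ← intervalIntegral.integral_of_le (by positivity),
    intervalIntegral.integral_deriv_eq_sub
      (fun x _ => (hFc.differentiable (by norm_num)).differentiableAt)
      ((hFc.continuous_deriv le_rfl).intervalIntegrable _ _)]
  have hsin : Real.sin (w * (Real.pi / 2)) = (-1) ^ (m + 1) := by
    rw [hw, ← Real.cos_nat_mul_pi, ← Real.sin_add_pi_div_two]
    congr 1; ring
  have hpos : 0 < w ^ 2 - 1 := by nlinarith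
  have hsq := Real.sq_sqrt hpos.le
  have hsp := Real.sqrt_pos.2 hpos
  have hpp := Real.sqrt_pos.2 Real.pi_pos
  simp only [hF, hsin, adsP_pi, ← hw, Real.sin_pi_div_two, mul_zero, Real.sin_zero, hC]
  field_simp
  rw [hsq]
  ring
end

section
/- For every j ∈ ℕ and every x ∈ (0, π/2), |e_j(x)| ≤ (2/√π)·ω_j. -/
open Real MeasureTheory

theorem abs_sin_nat_mul_le (k : ℕ) (x : ℝ) : |Real.sin (k * x)| ≤ k * |Real.sin x| := by
  induction k with
  | zero => simp
  | succ k ih =>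
    push_cast
    rw [add_mul, one_mul, Real.sin_add]
    have h1 : |Real.sin (k * x) * Real.cos x| ≤ |Real.sin (k * x)| := by
      rw [abs_mul]
      exact mul_le_of_le_one_right (abs_nonneg _) (Real.abs_cos_le_one x)
    have h2 : |Real.cos (k * x) * Real.sin x| ≤ |Real.sin x| := by
      rw [abs_mul]
      exact mul_le_of_le_one_left (abs_nonneg _) (Real.abs_cos_le_one _)
    have h3 := abs_add_le (Real.sin (k * x) * Real.cos x) (Real.cos (k * x) * Real.sin x)
    linarith

/-- For every `j ∈ ℕ` and `x ∈ (0, π/2)`, `|e_j(x)| ≤ (2/√π)·ω_j`. -/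
theorem ads_eigenfunction_sup_bound (j : ℕ) (x : ℝ)
    (hx : x ∈ Set.Ioo 0 (Real.pi / 2)) :
    |e j x| ≤ (2 / Real.sqrt Real.pi) * ω j := by
  obtain ⟨h0, h1⟩ := hx
  have hs : 0 < Real.sin x := Real.sin_pos_of_pos_of_lt_pi h0 (by linarith [Real.pi_pos])
  have hc : 0 < Real.cos x := Real.cos_pos_of_mem_Ioo ⟨by linarith, h1⟩
  have hw : 3 ≤ ω j := by unfold ω; linarith [(Nat.cast_nonneg j : (0:ℝ) ≤ j)]
  have hk := abs_sin_nat_mul_le (2 * j + 2) x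
  have hcast : ((2 * j + 2 : ℕ) : ℝ) = ω j - 1 := by unfold ω; push_cast; ring
  rw [hcast, abs_of_pos hs] at hk
  have hsub : Real.sin ((ω j - 1) * x)
      = Real.sin (ω j * x) * Real.cos x - Real.cos (ω j * x) * Real.sin x := by
    rw [sub_mul, one_mul, Real.sin_sub]
  have hF : ω j * Real.sin (ω j * x) / Real.tan x - Real.cos (ω j * x)
      = (ω j - 1) * Real.cos (ω j * x) + ω j * (Real.sin ((ω j - 1) * x) / Real.sin x) := by
    rw [hsub, Real.tan_eq_sin_div_cos]
    field_simp
    ring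
  have hS : |Real.sin ((ω j - 1) * x) / Real.sin x| ≤ ω j - 1 := by
    rw [abs_div, abs_of_pos hs, div_le_iff₀ hs]
    exact hk
  have hB : |ω j * Real.sin (ω j * x) / Real.tan x - Real.cos (ω j * x)| ≤ ω j ^ 2 - 1 := by
    rw [hF]
    have hC := abs_le.1 (Real.abs_cos_le_one (ω j * x))
    have hS' := abs_le.1 hS
    rw [abs_le]
    constructor <;> nlinarith [hC.1, hC.2, hS'.1, hS'.2]
  have hpos : 0 < ω j ^ 2 - 1 := by nlinarith
  have hq : 0 < Real.sqrt (ω j ^ 2 - 1) := Real.sqrt_pos.2 hpos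
  have hle : Real.sqrt (ω j ^ 2 - 1) ≤ ω j := Real.sqrt_le_iff.2 ⟨by linarith, by linarith⟩
  have hp : 0 ≤ 2 / Real.sqrt Real.pi := by positivity
  unfold e
  rw [abs_mul, abs_mul, abs_of_nonneg hp, abs_of_pos (inv_pos.2 hq), mul_assoc]
  apply mul_le_mul_of_nonneg_left _ hp
  rw [inv_mul_le_iff₀ hq]
  nlinarith [Real.mul_self_sqrt hpos.le]
end

section
/- For every j ∈ ℕ and every x ∈ (0, π/2), |tan(x)·e_j'(x)| ≤ (4/√π)·ω_j; equivalently, |tan(x)·e_j'(x)/ω_j| ≤ 4/√π. -/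
open Real MeasureTheory

/-- For every `j ∈ ℕ` and `x ∈ (0, π/2)`, `|tan(x)·e_j'(x)| ≤ (4/√π)·ω_j`. -/
theorem ads_eigenfunction_derivative_sup_bound (j : ℕ) (x : ℝ)
    (hx : x ∈ Set.Ioo 0 (Real.pi / 2)) :
    |Real.tan x * e' j x| ≤ (4 / Real.sqrt Real.pi) * ω j := by
  obtain ⟨hx0, hx1⟩ := hx
  have hw : 3 ≤ ω j := by
    unfold ω
    have : (0:ℝ) ≤ j := Nat.cast_nonneg j
    linarith
  have hxt : x < Real.tan x := Real.lt_tan hx0 hx1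
  unfold e'
  generalize ω j = w at hw ⊢
  generalize Real.tan x = t at hxt ⊢
  have ht : 0 < t := hx0.trans hxt
  have hs : 0 < Real.sqrt (w ^ 2 - 1) := Real.sqrt_pos.mpr (by nlinarith)
  have hs2 : Real.sqrt (w ^ 2 - 1) ^ 2 = w ^ 2 - 1 := Real.sq_sqrt (by nlinarith)
  have hsp : 0 < Real.sqrt Real.pi := Real.sqrt_pos.mpr Real.pi_pos
  generalize Real.sqrt (w ^ 2 - 1) = s at hs hs2 ⊢
  generalize Real.sqrt Real.pi = p at hsp ⊢
  have key : |w * Real.cos (w * x) - Real.sin (w * x) / t| ≤ 2 * s := by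
    rcases le_or_gt (w * x) 1 with h | h
    · have hθ : 0 ≤ w * x := by positivity
      have hpi := Real.pi_gt_three
      have hc : 0 ≤ Real.cos (w * x) :=
        Real.cos_nonneg_of_neg_pi_div_two_le_of_le (by linarith) (by linarith)
      have hc1 := Real.cos_le_one (w * x)
      have hsn : 0 ≤ Real.sin (w * x) := Real.sin_nonneg_of_nonneg_of_le_pi hθ (by linarith)
      have hsl : Real.sin (w * x) ≤ w * x := Real.sin_le hθ
      have h1 : Real.sin (w * x) / t ≤ w := by
        rw [div_le_iff₀ ht]
        nlinarith
      have h0 : 0 ≤ Real.sin (w * x) / t := by positivity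
      have hws : w ≤ 2 * s := by nlinarith
      have h2 : 0 ≤ w * Real.cos (w * x) := by positivity
      have h3 : w * Real.cos (w * x) ≤ w := by nlinarith
      rw [abs_le]
      constructor <;> linarith
    · apply abs_le_of_sq_le_sq _ (by positivity)
      have hc := Real.sin_sq_add_cos_sq (w * x)
      have hu : t⁻¹ < w := by
        rw [inv_lt_iff_one_lt_mul₀ ht]
        nlinarith
      have hu0 : 0 < t⁻¹ := by positivity
      rw [div_eq_mul_inv]
      generalize Real.sin (w * x) = S at *
      generalize Real.cos (w * x) = C at *
      generalize t⁻¹ = u at *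
      have h1 : (w * C - S * u) ^ 2 ≤ (w ^ 2 + u ^ 2) * (S ^ 2 + C ^ 2) := by
        nlinarith [sq_nonneg (w * S + C * u)]
      rw [hc] at h1
      nlinarith
  have e1 : t * (2 / p * w * s⁻¹ * (w * Real.cos (w * x) / t - Real.sin (w * x) / t ^ 2))
      = (2 / p * w * s⁻¹) * (w * Real.cos (w * x) - Real.sin (w * x) / t) := by
    field_simp
  have hk : 0 ≤ 2 / p * w * s⁻¹ := by positivity
  rw [e1, abs_mul, abs_of_nonneg hk]
  calc _ ≤ (2 / p * w * s⁻¹) * (2 * s) := mul_le_mul_of_nonneg_left key hk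
    _ = 4 / p * w := by
      field_simp
      norm_num
end

section
/- For every j ∈ ℕ and every x ∈ [0, π/2], |∫_x^{π/2} e_j(y)·sin(y)·cos(y) dy| ≤ 2/ω_j. -/
open Real MeasureTheory

noncomputable def auxP (w y : ℝ) : ℝ :=
  -(cos (w * y) * cos y ^ 2)
    - 3 / 2 * ((2 * cos (2 * y) * cos (w * y) + w * sin (2 * y) * sin (w * y)) / (w ^ 2 - 4))

lemma auxP_deriv (w y : ℝ) (hw : 3 ≤ w) :
    HasDerivAt (auxP w) (w * sin (w * y) * cos y ^ 2 - cos (w * y) * sin y * cos y) y := by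
  have h0 : w ^ 2 - 4 ≠ 0 := by nlinarith
  have hl : ∀ a : ℝ, HasDerivAt (fun y : ℝ => a * y) a y := fun a => by
    simpa using (hasDerivAt_id y).const_mul a
  have hc := (hl w).cos
  have hs := (hl w).sin
  have hc2 := (hl 2).cos
  have hs2 := (hl 2).sin
  have hcy := (hasDerivAt_cos y).pow 2
  have h := ((hc.mul hcy).neg).sub (((((hc2.const_mul 2).mul hc).add
    ((hs2.const_mul w).mul hs)).div_const (w ^ 2 - 4)).const_mul (3 / 2))
  refine (h.congr_deriv ?_)
  simp only [Pi.pow_apply]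
  rw [sin_two_mul]
  field_simp
  push_cast
  ring

lemma auxP_bound (j : ℕ) (y : ℝ) : |auxP (ω j) y| ≤ 8 / 5 := by
  rcases Nat.eq_zero_or_pos j with rfl | hj
  · have h3 : ω 0 = 3 := by simp [ω]
    have : auxP (ω 0) y = -(8 / 5 * cos y ^ 5) := by
      rw [h3, auxP, cos_three_mul, sin_three_mul, cos_two_mul, sin_two_mul]
      have hs : sin y ^ 2 = 1 - cos y ^ 2 := sin_sq y
      have e1 : 3 * (2 * sin y * cos y) * (3 * sin y - 4 * sin y ^ 3)
          = 3 * (2 * cos y) * (sin y ^ 2 * (3 - 4 * sin y ^ 2)) := by ring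
      rw [e1, hs]
      ring
    rw [this, abs_neg, abs_mul, abs_pow]
    have := pow_le_one₀ (n := 5) (abs_nonneg _) (abs_cos_le_one y)
    norm_num
    linarith
  · have hw : 5 ≤ ω j := by
      have : (1 : ℝ) ≤ j := by exact_mod_cast hj
      unfold ω; linarith
    generalize ω j = w at hw
    have h1 : |cos (w * y) * cos y ^ 2| ≤ 1 := by
      rw [abs_mul, abs_pow]
      exact mul_le_one₀ (abs_cos_le_one _) (by positivity)
        (pow_le_one₀ (abs_nonneg _) (abs_cos_le_one _))
    have a1 : |cos (2 * y) * cos (w * y)| ≤ 1 := by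
      rw [abs_mul]
      exact mul_le_one₀ (abs_cos_le_one _) (abs_nonneg _) (abs_cos_le_one _)
    have a2 : |sin (2 * y) * sin (w * y)| ≤ 1 := by
      rw [abs_mul]
      exact mul_le_one₀ (abs_sin_le_one _) (abs_nonneg _) (abs_sin_le_one _)
    have h2 : |(2 * cos (2 * y) * cos (w * y) + w * sin (2 * y) * sin (w * y)) / (w ^ 2 - 4)|
        ≤ 1 / 3 := by
      have hp : 0 < w ^ 2 - 4 := by nlinarith
      rw [abs_div, abs_of_pos hp, div_le_iff₀ hp]
      rw [abs_le] at *
      constructor <;> nlinarith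
    unfold auxP
    rw [abs_le] at *
    constructor <;> linarith

/-- For every `j ∈ ℕ` and `x ∈ [0, π/2]`,
`|∫_x^{π/2} e_j(y)·sin(y)·cos(y) dy| ≤ 2/ω_j`. -/
theorem ads_eigenfunction_tail_integral_bound (j : ℕ) (x : ℝ)
    (hx : x ∈ Set.Icc 0 (Real.pi / 2)) :
    |∫ y in Set.Ioo x (Real.pi / 2), e j y * Real.sin y * Real.cos y| ≤ 2 / ω j := by
  have hw : 3 ≤ ω j := by unfold ω; linarith [(Nat.cast_nonneg j : (0 : ℝ) ≤ j)]
  have hb := auxP_bound j x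
  have hend : auxP (ω j) (π / 2) = 0 := by
    have : cos (ω j * (π / 2)) = 0 := by
      rw [cos_eq_zero_iff]
      refine ⟨j + 1, ?_⟩
      unfold ω; push_cast; ring
    have h2 : 2 * (π / 2) = π := by ring
    simp [auxP, this, h2]
  have hI : ∫ y in Set.Ioo x (π / 2), e j y * sin y * cos y
      = (2 / √π) * (√(ω j ^ 2 - 1))⁻¹ * (-(auxP (ω j) x)) := by
    have hc : ∫ y in Set.Ioo x (π / 2), e j y * sin y * cos y
      = ∫ y in Set.Ioo x (π / 2), (2 / √π) * (√(ω j ^ 2 - 1))⁻¹ *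
        (ω j * sin (ω j * y) * cos y ^ 2 - cos (ω j * y) * sin y * cos y) := by
      refine setIntegral_congr_fun measurableSet_Ioo ?_
      intro y hy
      have hs : sin y ≠ 0 :=
        (sin_pos_of_pos_of_lt_pi (by linarith [hx.1, hy.1]) (by linarith [hy.2, pi_pos])).ne'
      have hcy : cos y ≠ 0 :=
        (cos_pos_of_mem_Ioo ⟨by linarith [hx.1, hy.1, pi_pos], hy.2⟩).ne'
      simp only [e, tan_eq_sin_div_cos]
      generalize 2 / √π * (√(ω j ^ 2 - 1))⁻¹ = K
      field_simp
    rw [hc, integral_const_mul, ← integral_Ioc_eq_integral_Ioo,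
      ← intervalIntegral.integral_of_le hx.2,
      intervalIntegral.integral_eq_sub_of_hasDerivAt (fun y _ => auxP_deriv (ω j) y hw)
        (Continuous.intervalIntegrable (by fun_prop) _ _), hend, zero_sub]
  rw [hI, abs_mul, abs_neg]
  generalize ω j = w at *
  have hp : 0 < w ^ 2 - 1 := by nlinarith
  have hs : 0 < √π * √(w ^ 2 - 1) := by positivity
  have hk : 8 / 5 * w ≤ √π * √(w ^ 2 - 1) := by
    rw [← sqrt_mul pi_pos.le]
    apply le_sqrt_of_sq_le
    nlinarith [pi_gt_three]
  have : 2 / √π * (√(w ^ 2 - 1))⁻¹ = 2 / (√π * √(w ^ 2 - 1)) := by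
    field_simp
  rw [this, abs_of_pos (by positivity), div_mul_eq_mul_div, div_le_div_iff₀ hs (by linarith)]
  nlinarith
end

section
/- For every integer a ≥ 1, ∫₀^{π/2} sin(2ax)·cos(x)/sin(x) dx = π/2. -/
open Real MeasureTheory

lemma aux_cos_int (k : ℕ) (hk : 1 ≤ k) :
    (∫ x in (0:ℝ)..(Real.pi / 2), Real.cos (2 * (k : ℝ) * x)) = 0 := by
  have hk' : (2 * (k : ℝ)) ≠ 0 := by positivity
  rw [intervalIntegral.integral_comp_mul_left (fun y => Real.cos y) hk', integral_cos]
  have : 2 * (k : ℝ) * (Real.pi / 2) = k * Real.pi := by ring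
  rw [this, Real.sin_nat_mul_pi]
  simp

lemma aux_exists (n : ℕ) : ∃ g : ℝ → ℝ, Continuous g ∧
    (∀ x, Real.sin (2 * ((n + 1 : ℕ) : ℝ) * x) * Real.cos x = g x * Real.sin x) ∧
    (∫ x in (0:ℝ)..(Real.pi / 2), g x) = Real.pi / 2 := by
  induction n with
  | zero =>
    refine ⟨fun x => 1 + Real.cos (2 * ((1 : ℕ) : ℝ) * x), by fun_prop, ?_, ?_⟩
    · intro x
      simp only [zero_add, Nat.cast_one, mul_one]
      rw [Real.sin_two_mul, Real.cos_two_mul]; ring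
    · rw [intervalIntegral.integral_add (Continuous.intervalIntegrable (by fun_prop) _ _)
        (Continuous.intervalIntegrable (by fun_prop) _ _), aux_cos_int 1 le_rfl]
      simp
  | succ n ih =>
    obtain ⟨g, hg, h1, h2⟩ := ih
    refine ⟨fun x => g x + (Real.cos (2 * ((n + 1 : ℕ) : ℝ) * x) +
      Real.cos (2 * ((n + 1 + 1 : ℕ) : ℝ) * x)), by fun_prop, ?_, ?_⟩
    · intro x
      have e : 2 * ((n + 1 + 1 : ℕ) : ℝ) * x = 2 * ((n + 1 : ℕ) : ℝ) * x + 2 * x := by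
        push_cast; ring
      simp only [add_mul, ← h1 x]
      rw [← add_mul, e, Real.sin_add, Real.cos_add, Real.sin_two_mul, Real.cos_two_mul]
      generalize 2 * ((n + 1 : ℕ) : ℝ) * x = y
      have := Real.sin_sq_add_cos_sq x
      linear_combination (2 * Real.sin y * Real.cos x) * this
    · rw [intervalIntegral.integral_add (Continuous.intervalIntegrable (by fun_prop) _ _)
        (Continuous.intervalIntegrable (by fun_prop) _ _),
        intervalIntegral.integral_add (Continuous.intervalIntegrable (by fun_prop) _ _)
        (Continuous.intervalIntegrable (by fun_prop) _ _), aux_cos_int _ (by omega),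
        aux_cos_int _ (by omega), h2]
      simp

/-- For every integer `a ≥ 1`, `∫₀^{π/2} sin(2ax)·cos(x)/sin(x) dx = π/2`. -/
theorem oscillatory_integral_sin_even_over_tan (a : ℕ) (ha : 1 ≤ a) :
    (∫ x in Set.Ioo (0 : ℝ) (Real.pi / 2),
        Real.sin (2 * (a : ℝ) * x) * Real.cos x / Real.sin x) = Real.pi / 2 := by
  obtain ⟨n, rfl⟩ : ∃ n, a = n + 1 := ⟨a - 1, by omega⟩
  obtain ⟨g, hg, h1, h2⟩ := aux_exists n
  refine Eq.trans ?_ h2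
  rw [intervalIntegral.integral_of_le (by positivity), integral_Ioc_eq_integral_Ioo]
  refine setIntegral_congr_fun measurableSet_Ioo ?_
  intro x hx
  have hs : Real.sin x ≠ 0 :=
    (Real.sin_pos_of_pos_of_lt_pi hx.1 (by linarith [hx.2, Real.pi_pos])).ne'
  simp only [h1 x]
  field_simp
end

section
/- For every integer a ≥ 3, ∫₀^{π/2} cos²(x)·sin(2ax)·cos(x)/sin(x) dx = π/2. -/
open Real MeasureTheory

lemma aux_J (m : ℤ) : (∫ x in (0:ℝ)..(Real.pi / 2), Real.cos (2 * (m:ℝ) * x)) =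
    if m = 0 then Real.pi / 2 else 0 := by
  split_ifs with h
  · subst h; simp
  · have h' : (2 * (m:ℝ)) ≠ 0 := by
      have : (m:ℝ) ≠ 0 := by exact_mod_cast h
      positivity
    rw [intervalIntegral.integral_comp_mul_left (fun x => Real.cos x) h', integral_cos]
    have : 2 * (m:ℝ) * (Real.pi / 2) = m * Real.pi := by ring
    rw [this, Real.sin_int_mul_pi]
    simp

lemma aux_step (n : ℕ) (x : ℝ) :
    Real.cos x ^ 2 * (Real.cos (2 * (n:ℝ) * x) + Real.cos (2 * ((n:ℝ)+1) * x)) =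
    1/4 * Real.cos (2 * (((n:ℤ)-1 : ℤ):ℝ) * x) + 3/4 * Real.cos (2 * ((n:ℤ):ℝ) * x)
    + 3/4 * Real.cos (2 * (((n:ℤ)+1 : ℤ):ℝ) * x)
    + 1/4 * Real.cos (2 * (((n:ℤ)+2 : ℤ):ℝ) * x) := by
  push_cast
  have e1 : 2 * ((n:ℝ) - 1) * x = 2 * (n:ℝ) * x - 2 * x := by ring
  have e2 : 2 * ((n:ℝ) + 1) * x = 2 * (n:ℝ) * x + 2 * x := by ring
  have e3 : 2 * ((n:ℝ) + 2) * x = 2 * (n:ℝ) * x + 2 * (2 * x) := by ring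
  rw [e1, e2, e3, Real.cos_sub, Real.cos_add, Real.cos_add, Real.cos_two_mul (2*x),
    Real.sin_two_mul (2*x), Real.cos_sq x]
  ring

lemma aux_int (n : ℕ) :
    (∫ x in (0:ℝ)..(Real.pi / 2), Real.cos x ^ 2 *
      (Real.cos (2 * (n:ℝ) * x) + Real.cos (2 * ((n:ℝ)+1) * x))) =
    if n = 0 then 3 * Real.pi / 8 else if n = 1 then Real.pi / 8 else 0 := by
  simp_rw [aux_step]
  have hi : ∀ (c : ℝ) (m : ℤ), IntervalIntegrable (fun x : ℝ => c * Real.cos (2 * (m:ℝ) * x))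
      volume 0 (Real.pi/2) := fun c m => by
    apply Continuous.intervalIntegrable; fun_prop
  rw [intervalIntegral.integral_add (((hi _ _).add (hi _ _)).add (hi _ _)) (hi _ _),
    intervalIntegral.integral_add ((hi _ _).add (hi _ _)) (hi _ _),
    intervalIntegral.integral_add (hi _ _) (hi _ _)]
  simp only [intervalIntegral.integral_const_mul, aux_J]
  have h1 : ((n:ℤ) + 1 = 0) ↔ False := iff_false_intro (by omega)
  have h2 : ((n:ℤ) + 2 = 0) ↔ False := iff_false_intro (by omega)
  have h3 : ((n:ℤ) - 1 = 0) ↔ n = 1 := by omega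
  have h4 : ((n:ℤ) = 0) ↔ n = 0 := by omega
  simp only [h1, h2, h3, h4]
  by_cases a : n = 0
  · subst a; simp; ring
  · by_cases b : n = 1
    · subst b; simp; ring
    · simp [a, b]

lemma aux_sum (n : ℕ) (x : ℝ) : Real.sin (2 * (n:ℝ) * x) * Real.cos x =
    (∑ k ∈ Finset.range n, (Real.cos (2 * (k:ℝ) * x) + Real.cos (2 * ((k:ℝ)+1) * x)))
      * Real.sin x := by
  induction n with
  | zero => simp
  | succ n ih =>
    rw [Finset.sum_range_succ, add_mul, ← ih]
    push_cast
    have e2 : 2 * ((n:ℝ) + 1) * x = 2 * (n:ℝ) * x + 2 * x := by ring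
    rw [e2, Real.sin_add, Real.cos_add, Real.sin_two_mul x, Real.cos_two_mul x]
    have := Real.sin_sq_add_cos_sq x
    have h : Real.sin x ^ 2 = 1 - Real.cos x ^ 2 := by linarith
    linear_combination (2 * Real.sin (2 * (n:ℝ) * x) * Real.cos x) * h

/-- For every integer `a ≥ 3`, `∫₀^{π/2} cos²(x)·sin(2ax)·cos(x)/sin(x) dx = π/2`. -/
theorem oscillatory_integral_cos_sq_sin_even_over_tan (a : ℕ) (ha : 3 ≤ a) :
    (∫ x in Set.Ioo (0 : ℝ) (Real.pi / 2),
        Real.cos x ^ 2 * (Real.sin (2 * (a : ℝ) * x) * Real.cos x / Real.sin x)) =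
      Real.pi / 2 := by
  have h1 : ∀ x ∈ Set.Ioo (0:ℝ) (Real.pi/2),
      Real.cos x ^ 2 * (Real.sin (2 * (a : ℝ) * x) * Real.cos x / Real.sin x) =
      ∑ k ∈ Finset.range a, Real.cos x ^ 2 *
        (Real.cos (2 * (k:ℝ) * x) + Real.cos (2 * ((k:ℝ)+1) * x)) := by
    intro x hx
    have hs : Real.sin x ≠ 0 :=
      (Real.sin_pos_of_pos_of_lt_pi hx.1 (by linarith [hx.2, Real.pi_pos])).ne'
    rw [aux_sum, mul_div_assoc, div_self hs, mul_one, Finset.mul_sum]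
  rw [setIntegral_congr_fun measurableSet_Ioo h1, ← integral_Ioc_eq_integral_Ioo,
    ← intervalIntegral.integral_of_le (by positivity),
    intervalIntegral.integral_finsetSum]
  · simp_rw [aux_int]
    obtain ⟨b, rfl⟩ : ∃ b, a = b + 2 := ⟨a - 2, by omega⟩
    rw [Finset.sum_range_succ', Finset.sum_range_succ']
    simp
    ring
  · intro k _
    apply Continuous.intervalIntegrable
    fun_prop
end

section
/- Let c := 1/π − π + 2·∫₀¹ sin(2πy)/y dy. There exists a constant C > 0 such that for every integer a ≥ 2, |∫_{π/a}^{π/2} cos(2ax)/tan²(x) dx − c·a| ≤ C/a³; that is, this oscillatory integral equals c·a + O(a^{−3}) as a → ∞. -/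
open Real MeasureTheory

noncomputable def DD : ℕ → ℝ → ℝ
  | 0, _ => 1
  | n+1, x => DD n x + 2 * cos ((2 * (n:ℝ) + 2) * x)
noncomputable def SS : ℕ → ℝ → ℝ
  | 0, _ => 0
  | n+1, x => SS n x + DD n x

lemma DD_cont (n : ℕ) : Continuous (DD n) := by
  induction n with
  | zero => exact continuous_const
  | succ n ih => 
    show Continuous (fun x => DD n x + 2 * cos ((2 * (n:ℝ) + 2) * x))
    fun_prop
lemma SS_cont (n : ℕ) : Continuous (SS n) := by
  induction n with
  | zero => exact continuous_const
  | succ n ih => 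
    show Continuous (fun x => SS n x + DD n x)
    exact ih.add (DD_cont n)

lemma DD_eq (n : ℕ) (x : ℝ) : sin x * DD n x = sin ((2 * (n:ℝ) + 1) * x) := by
  induction n with
  | zero => simp [DD]
  | succ n ih =>
    have h1 : (2 * ((n+1:ℕ):ℝ) + 1) * x = (2 * (n:ℝ) + 2) * x + x := by push_cast; ring
    have h2 : (2 * (n:ℝ) + 1) * x = (2 * (n:ℝ) + 2) * x - x := by ring
    rw [h1, DD, mul_add, ih, h2, sin_add, sin_sub]; ring
lemma SS_eq (n : ℕ) (x : ℝ) : sin x ^ 2 * SS n x = sin ((n:ℝ) * x) ^ 2 := by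
  induction n with
  | zero => simp [SS]
  | succ n ih =>
    have h3 := DD_eq n x
    have h1 : ((n+1:ℕ):ℝ) * x = n * x + x := by push_cast; ring
    have h2 : (2 * (n:ℝ) + 1) * x = n * x + (n * x + x) := by ring
    rw [h2, sin_add] at h3
    rw [h1, SS, mul_add, ih, pow_two (sin x), mul_assoc, h3, sin_add, cos_add]
    have a1 := sin_sq_add_cos_sq x
    have a2 := sin_sq_add_cos_sq (n*x)
    have a3 : cos (n*x)^2 = 1 - sin (n*x)^2 := by linarith
    have a4 : cos (x)^2 = 1 - sin (x)^2 := by linarith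
    ring_nf
    ring_nf at a3
    simp only [a3, a4]
    ring

lemma DD_int (n : ℕ) : ∫ x in (0:ℝ)..(π/2), DD n x = π/2 := by
  induction n with
  | zero => simp [DD]
  | succ n ih =>
    show ∫ x in (0:ℝ)..(π/2), (DD n x + 2 * cos ((2 * (n:ℝ) + 2) * x)) = _
    rw [intervalIntegral.integral_add ((DD_cont n).intervalIntegrable _ _) 
      (Continuous.intervalIntegrable (by fun_prop) _ _), ih, intervalIntegral.integral_const_mul,
      intervalIntegral.integral_comp_mul_left (f := cos) (by positivity), integral_cos]
    have : (2 * (n:ℝ) + 2) * (π/2) = ((n+1:ℕ):ℝ) * π := by push_cast; ring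
    rw [this, sin_nat_mul_pi]; simp
lemma SS_int (n : ℕ) : ∫ x in (0:ℝ)..(π/2), SS n x = n * (π/2) := by
  induction n with
  | zero => simp [SS]
  | succ n ih =>
    show ∫ x in (0:ℝ)..(π/2), (SS n x + DD n x) = _
    rw [intervalIntegral.integral_add ((SS_cont n).intervalIntegrable _ _) 
      ((DD_cont n).intervalIntegrable _ _), ih, DD_int]
    push_cast; ring

lemma nonneg_of_deriv (f f' : ℝ → ℝ) (h : ∀ x, HasDerivAt f (f' x) x) (h0 : f 0 = 0)
    (h' : ∀ x, 0 ≤ x → 0 ≤ f' x) : ∀ x, 0 ≤ x → 0 ≤ f x := by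
  intro x hx
  have : MonotoneOn f (Set.Ici 0) := by
    apply monotoneOn_of_deriv_nonneg (convex_Ici 0)
    · exact fun y _ => (h y).continuousAt.continuousWithinAt
    · exact fun y _ => (h y).differentiableAt.differentiableWithinAt
    · intro y hy
      rw [interior_Ici] at hy
      rw [(h y).deriv]; exact h' y (le_of_lt hy)
  have := this (Set.mem_Ici.2 le_rfl) (Set.mem_Ici.2 hx) hx
  linarith

lemma dpow (n : ℕ) (x : ℝ) : HasDerivAt (fun x : ℝ => x^n) (n * x^(n-1)) x := hasDerivAt_pow n x

lemma s3 : ∀ x, 0 ≤ x → 0 ≤ sin x - (x - x^3/6) := by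
  refine nonneg_of_deriv _ (fun x => cos x - (1 - 3 * x^2/6)) (fun x => ?_) (by simp) ?_
  · exact ((hasDerivAt_sin x).sub ((hasDerivAt_id x).sub ((dpow 3 x).div_const 6)))
  · intro x hx
    have := one_sub_sq_div_two_le_cos (x := x)
    show 0 ≤ cos x - (1 - 3 * x^2/6)
    linarith
lemma c4 : ∀ x, 0 ≤ x → 0 ≤ (1 - x^2/2 + x^4/24) - cos x := by
  refine nonneg_of_deriv _ (fun x => (0 - 2 * x^1/2 + 4*x^3/24) - (-sin x)) (fun x => ?_) (by simp) ?_
  · exact (((hasDerivAt_const x 1).sub ((dpow 2 x).div_const 2)).add ((dpow 4 x).div_const 24)).sub (hasDerivAt_cos x)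
  · intro x hx
    have := s3 x hx
    show 0 ≤ (0 - 2 * x^1/2 + 4*x^3/24) - (-sin x)
    linarith
lemma s5 : ∀ x, 0 ≤ x → 0 ≤ (x - x^3/6 + x^5/120) - sin x := by
  refine nonneg_of_deriv _ (fun x => (1 - 3 * x^2/6 + 5*x^4/120) - (cos x)) (fun x => ?_) (by simp) ?_
  · exact (((hasDerivAt_id x).sub ((dpow 3 x).div_const 6)).add ((dpow 5 x).div_const 120)).sub (hasDerivAt_sin x)
  · intro x hx
    have := c4 x hx
    show 0 ≤ (1 - 3 * x^2/6 + 5*x^4/120) - (cos x)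
    linarith

lemma sin_lb (x : ℝ) (h0 : 0 ≤ x) (h2 : x ≤ π/2) : x/2 ≤ sin x := by
  have := mul_le_sin h0 h2
  have h4 : 1/2 ≤ 2/π := by
    rw [div_le_div_iff₀ (by norm_num) pi_pos]; linarith [pi_le_four]
  nlinarith

lemma g_bd (x : ℝ) (h0 : 0 < x) (h2 : x ≤ π/2) : |1/sin x^2 - 1/x^2 - 1/3| ≤ 4 * x^2 := by
  have hx2 : x ≤ 2 := by linarith [pi_le_four]
  have a := s3 x h0.le
  have b := s5 x h0.le
  have l := sin_lb x h0.le h2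
  have hs : 0 < sin x := by linarith
  obtain ⟨t, ht⟩ : ∃ t, sin x = x * (1 - x^2/6 + t * x^4) := 
    ⟨(sin x / x - 1 + x^2/6)/x^4, by field_simp; ring⟩
  have t0 : 0 ≤ t := by
    have : 0 ≤ t * x^5 := by nlinarith
    exact nonneg_of_mul_nonneg_left this (by positivity)
  have t1 : t ≤ 1/120 := by
    have : t * x^5 ≤ 1/120 * x^5 := by nlinarith
    exact le_of_mul_le_mul_right this (by positivity)
  have e : 1/sin x^2 - 1/x^2 - 1/3 = (x^2 - sin x^2 - x^2 * sin x^2/3) / (x^2 * sin x^2) := by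
    field_simp
  have hsq : x^2/4 ≤ sin x^2 := by nlinarith
  rw [e, abs_div, abs_of_pos (a := x^2 * sin x^2) (by positivity), div_le_iff₀ (by positivity)]
  have key : |x^2 - sin x^2 - x^2 * sin x^2/3| ≤ x^6 := by
    rw [ht]
    have : x^2 - (x * (1 - x^2/6 + t * x^4))^2 - x^2 * (x * (1 - x^2/6 + t * x^4))^2/3
      = x^6 * (-1/36 - 2*t*(1-x^2/6) - t^2*x^4 + 1/9 - x^2/108 - 2*t*x^2/3*(1-x^2/6) - t^2*x^6/3) := by ring
    rw [this, abs_mul, abs_of_pos (by positivity : 0 < x^6)]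
    have hy : x^2 ≤ 4 := by nlinarith
    have hy0 : 0 ≤ x^2 := by positivity
    have p1 : x^4 ≤ 16 := by nlinarith
    have p2 : x^6 ≤ 64 := by nlinarith
    have q1 : t^2 * x^4 ≤ (1/120)^2*16 := by gcongr
    have q2 : t^2 * x^6 ≤ (1/120)^2*64 := by gcongr
    have q3 : 0 ≤ t^2 * x^4 := by positivity
    have q4 : 0 ≤ t^2 * x^6 := by positivity
    have q5 : t * (1-x^2/6) ≤ 1/120 * 1 := by gcongr <;> nlinarith
    have q6 : 0 ≤ t * (1-x^2/6) := mul_nonneg t0 (by linarith)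
    have q7 : t * (1-x^2/6) * x^2 ≤ 1/120*4 := by nlinarith
    have q8 : 0 ≤ t * (1-x^2/6) * x^2 := by positivity
    have : |(-1/36 - 2*t*(1-x^2/6) - t^2*x^4 + 1/9 - x^2/108 - 2*t*x^2/3*(1-x^2/6) - t^2*x^6/3)| ≤ 1 := by
      rw [abs_le]; constructor <;> linarith
    exact mul_le_of_le_one_right (by positivity) this
  refine key.trans ?_
  calc x^6 = 4 * x^2 * (x^2 * (x^2/4)) := by ring
    _ ≤ _ := by gcongr

lemma cot_bd (x : ℝ) (h0 : 0 < x) (h2 : x ≤ π/2) : |cos x / sin x - 1/x + x/3| ≤ 4 * x^3 := by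
  have hx2 : x ≤ 2 := by linarith [pi_le_four]
  have a := s3 x h0.le
  have b := s5 x h0.le
  have c := c4 x h0.le
  have d := one_sub_sq_div_two_le_cos (x := x)
  have l := sin_lb x h0.le h2
  have hs : 0 < sin x := by linarith
  have e : cos x / sin x - 1/x + x/3 = (x * cos x - sin x + x^2 * sin x/3) / (x * sin x) := by
    field_simp
  rw [e, abs_div, abs_of_pos (a := x * sin x) (by positivity), div_le_iff₀ (by positivity)]
  have key : |x * cos x - sin x + x^2 * sin x/3| ≤ 2 * x^5 := by
    have b1 : x * cos x ≤ x * (1 - x^2/2 + x^4/24) := by gcongr; linarith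
    have b2 : x * (1 - x^2/2) ≤ x * cos x := by gcongr
    have b3 : x^2 * (x - x^3/6) ≤ x^2 * sin x := by gcongr; linarith
    have b4 : x^2 * sin x ≤ x^2 * (x - x^3/6 + x^5/120) := by gcongr; linarith
    have b5 : x^7 ≤ 4 * x^5 := by
      have : x^2 ≤ 4 := by nlinarith
      nlinarith [pow_pos h0 5]
    have b6 := pow_pos h0 5
    rw [abs_le]; constructor <;> nlinarith
  refine key.trans ?_
  calc 2 * x^5 = 4 * x^3 * (x * (x/2)) := by ring
    _ ≤ _ := by gcongr

lemma L_eq : ∫ y in Set.Ioo (0 : ℝ) 1, sin (2 * π * y) / y = ∫ u in (0:ℝ)..π, sinc u ^2 := by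
  have e1 : ∫ y in Set.Ioo (0 : ℝ) 1, sin (2 * π * y) / y = ∫ y in (0:ℝ)..1, 2 * sinc (2 * (π * y)) * π := by
    rw [intervalIntegral.integral_of_le zero_le_one, integral_Ioc_eq_integral_Ioo]
    refine setIntegral_congr_fun measurableSet_Ioo fun y hy => ?_
    have hy0 := hy.1
    have hp := pi_pos
    rw [sinc_of_ne_zero (by positivity)]
    field_simp
  rw [e1, intervalIntegral.integral_mul_const, 
    intervalIntegral.integral_comp_mul_left (f := fun u => 2 * sinc (2 * u)) pi_ne_zero]
  have c1 : Continuous fun u : ℝ => 2 * sinc (2*u) := by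
    have := continuous_sinc
    fun_prop
  have c2 : Continuous fun u : ℝ => sinc u ^ 2 := by
    have := continuous_sinc
    fun_prop
  have := intervalIntegral.integral_eq_sub_of_hasDerivAt_of_le (a := 0) (b := π) pi_pos.le
    (f := fun u => sin u * sinc u) (f' := fun u => 2 * sinc (2*u) - sinc u ^ 2)
    ((continuous_sin.mul continuous_sinc).continuousOn) (fun x hx => ?_) 
    ((c1.sub c2).intervalIntegrable _ _)
  · rw [intervalIntegral.integral_sub (c1.intervalIntegrable _ _) (c2.intervalIntegrable _ _)] at this
    simp only [sin_pi, sin_zero, zero_mul, sub_zero] at this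
    have hp := pi_ne_zero
    rw [smul_eq_mul, mul_zero, mul_one, mul_right_comm, inv_mul_cancel₀ hp]
    linarith
  · have hx0 := hx.1
    have : HasDerivAt (fun u => sin u * (sin u / u)) (2 * sinc (2*x) - sinc x ^ 2) x := by
      refine ((hasDerivAt_sin x).mul ((hasDerivAt_sin x).div (hasDerivAt_id x) hx0.ne')).congr_deriv ?_
      rw [sinc_of_ne_zero (by positivity), sinc_of_ne_zero hx0.ne', sin_two_mul]
      simp only [id, Pi.div_apply]
      field_simp
      ring
    refine this.congr_of_eventuallyEq ?_
    filter_upwards [lt_mem_nhds hx0] with u hu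
    rw [sinc_of_ne_zero hu.ne']

lemma main_S (a : ℕ) (ha : 2 ≤ a) :
    |(∫ x in (0:ℝ)..(π/a), SS a x) - a * (∫ u in (0:ℝ)..π, sinc u ^2) - π/(6*a)| ≤ 4 * (π/a)^3 := by
  have hA : (2:ℝ) ≤ a := by exact_mod_cast ha
  have hA0 : (0:ℝ) < a := by linarith
  have hp := pi_pos
  have hy : π/a ≤ π/2 := by gcongr
  have hs := continuous_sinc
  have cT : Continuous fun x : ℝ => a^2 * sinc (a * x)^2 := by fun_prop
  have cR : Continuous fun x : ℝ => 1/3 * sin (a * x)^2 := by fun_prop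
  have iT : ∫ x in (0:ℝ)..(π/a), a^2 * sinc (a * x)^2 = a * (∫ u in (0:ℝ)..π, sinc u ^2) := by
    rw [intervalIntegral.integral_const_mul, 
      intervalIntegral.integral_comp_mul_left (f := fun u => sinc u ^ 2) hA0.ne', mul_zero, mul_div_cancel₀ _ hA0.ne', smul_eq_mul]
    field_simp
  have iR : ∫ x in (0:ℝ)..(π/a), 1/3 * sin (a * x)^2 = π/(6*a) := by
    rw [intervalIntegral.integral_const_mul, 
      intervalIntegral.integral_comp_mul_left (f := fun u => sin u ^ 2) hA0.ne', mul_zero, mul_div_cancel₀ _ hA0.ne', smul_eq_mul, integral_sin_sq]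
    simp
    field_simp
    norm_num
  rw [← iT, ← iR, ← intervalIntegral.integral_sub ((SS_cont a).intervalIntegrable _ _) (cT.intervalIntegrable _ _), 
    ← intervalIntegral.integral_sub (Continuous.intervalIntegrable (by have := SS_cont a; fun_prop) _ _) (cR.intervalIntegrable _ _)]
  have := intervalIntegral.norm_integral_le_of_norm_le_const (a := 0) (b := π/a) (C := 4 * (π/a)^2)
    (f := fun x => SS a x - a^2 * sinc (a * x)^2 - 1/3 * sin (a * x)^2) (fun x hx => ?_)
  · rw [norm_eq_abs, sub_zero, abs_of_pos (a := π/a) (by positivity)] at this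
    refine this.trans (le_of_eq (by ring))
  · rw [Set.uIoc_of_le (by positivity)] at hx
    have hx0 := hx.1
    have hxy := hx.2
    have g := g_bd x hx0 (hxy.trans hy)
    have l := sin_lb x hx0.le (hxy.trans hy)
    have hsx : 0 < sin x := by linarith
    have e : SS a x - a^2 * sinc (a * x)^2 - 1/3 * sin (a * x)^2 = sin (a*x)^2 * (1/sin x^2 - 1/x^2 - 1/3) := by
      rw [sinc_of_ne_zero (by positivity), ← SS_eq]
      field_simp
      linear_combination 3 * SS_eq a x
    rw [e, norm_mul, norm_eq_abs, norm_eq_abs, abs_of_nonneg (sq_nonneg (sin (a*x)))]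
    calc _ ≤ 1 * (4 * x^2) := by gcongr; exact sin_sq_le_one _
      _ ≤ _ := by rw [one_mul]; gcongr

lemma I_eq (a : ℕ) (ha : 2 ≤ a) :
    ∫ x in Set.Ioo (π / (a : ℝ)) (π / 2), cos (2 * (a : ℝ) * x) / tan x ^ 2
    = cos (π/a) / sin (π/a) - 2 * (a * (π/2) - ∫ x in (0:ℝ)..(π/a), SS a x) := by
  have hA : (2:ℝ) ≤ a := by exact_mod_cast ha
  have hA0 : (0:ℝ) < a := by linarith
  have hp := pi_pos
  have hy : π/a ≤ π/2 := by gcongr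
  have hy0 : 0 < π/a := by positivity
  have hs : ∀ x ∈ Set.Icc (π/a) (π/2), sin x ≠ 0 := fun x hx => 
    (sin_pos_of_pos_of_lt_pi (by linarith [hx.1]) (by linarith [hx.2])).ne'
  have e1 : ∫ x in Set.Ioo (π / (a : ℝ)) (π / 2), cos (2 * (a : ℝ) * x) / tan x ^ 2
    = ∫ x in (π/a)..(π/2), (1 / sin x^2 - 2 * SS a x - cos (2 * a * x)) := by
    rw [intervalIntegral.integral_of_le hy, integral_Ioc_eq_integral_Ioo]
    refine setIntegral_congr_fun measurableSet_Ioo fun x hx => ?_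
    have h1 := hs x ⟨hx.1.le, hx.2.le⟩
    have h2 : cos x ≠ 0 := (cos_pos_of_mem_Ioo ⟨by linarith [hx.1], hx.2⟩).ne'
    have h3 : SS a x = sin (a*x)^2 / sin x^2 := by rw [← SS_eq]; field_simp
    have h4 : cos (2 * a * x) = 1 - 2 * sin (a*x)^2 := by
      rw [mul_assoc, cos_two_mul, cos_sq']; ring
    beta_reduce
    rw [h3, h4, tan_eq_sin_div_cos, div_pow, div_div_eq_mul_div, cos_sq']
    field_simp
  have cS := (SS_cont a)
  have i1 : IntervalIntegrable (fun x => 1 / sin x^2) volume (π/a) (π/2) := by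
    apply ContinuousOn.intervalIntegrable
    rw [Set.uIcc_of_le hy]
    exact continuousOn_const.div (by fun_prop) fun x hx => pow_ne_zero 2 (hs x hx)
  have i2 : IntervalIntegrable (fun x => 2 * SS a x) volume (π/a) (π/2) :=
    (cS.const_mul 2).intervalIntegrable _ _
  have i3 : IntervalIntegrable (fun x : ℝ => cos (2 * a * x)) volume (π/a) (π/2) :=
    Continuous.intervalIntegrable (by fun_prop) _ _
  have v1 : ∫ x in (π/a)..(π/2), 1 / sin x^2 = cos (π/a) / sin (π/a) := by
    rw [intervalIntegral.integral_eq_sub_of_hasDerivAt (f := fun x => -(cos x / sin x)) (fun x hx => ?_) i1]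
    · simp
    · rw [Set.uIcc_of_le hy] at hx
      have h := hs x hx
      refine ((hasDerivAt_cos x).div (hasDerivAt_sin x) h).neg.congr_deriv ?_
      rw [← neg_div]
      congr 1
      linarith [sin_sq_add_cos_sq x]
  have v3 : ∫ x in (π/a)..(π/2), cos (2 * a * x) = 0 := by
    rw [intervalIntegral.integral_comp_mul_left (f := cos) (by positivity), integral_cos]
    have h1 : 2 * (a:ℝ) * (π/2) = a * π := by ring
    have h2 : 2 * (a:ℝ) * (π/a) = 2 * π := by field_simp
    rw [h1, h2, sin_nat_mul_pi, sin_two_pi]; simp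
  have v2 := intervalIntegral.integral_add_adjacent_intervals (cS.intervalIntegrable (μ := volume) 0 (π/a)) (cS.intervalIntegrable (π/a) (π/2))
  rw [SS_int] at v2
  rw [e1, intervalIntegral.integral_sub (i1.sub i2) i3, intervalIntegral.integral_sub i1 i2, v1, v3,
    intervalIntegral.integral_const_mul]
  linarith


/-- With `c := 1/π − π + 2·∫₀¹ sin(2πy)/y dy`, there is a constant `C > 0` such that
for every integer `a ≥ 2`, `|∫_{π/a}^{π/2} cos(2ax)/tan²(x) dx − c·a| ≤ C/a³`;
that is, this oscillatory integral equals `c·a + O(a⁻³)` as `a → ∞`. -/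
theorem oscillatory_integral_cos_even_over_tan_sq :
    ∃ C > (0 : ℝ), ∀ a : ℕ, 2 ≤ a →
      |(∫ x in Set.Ioo (Real.pi / (a : ℝ)) (Real.pi / 2),
          Real.cos (2 * (a : ℝ) * x) / Real.tan x ^ 2) -
        (1 / Real.pi - Real.pi +
          2 * ∫ y in Set.Ioo (0 : ℝ) 1, Real.sin (2 * Real.pi * y) / y) * (a : ℝ)| ≤
      C / (a : ℝ) ^ 3 := by
  refine ⟨12 * π^3, by positivity, fun a ha => ?_⟩
  have hA : (2:ℝ) ≤ a := by exact_mod_cast ha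
  have hA0 : (0:ℝ) < a := by linarith
  have hp := pi_pos
  have hy : π/a ≤ π/2 := by gcongr
  rw [I_eq a ha, L_eq]
  have h1 := abs_le.1 (main_S a ha)
  have h2 := abs_le.1 (cot_bd (π/a) (by positivity) hy)
  have e1 : 1/(π/a) = 1/π * a := by field_simp
  have e2 : π/a/3 = 2 * (π/(6*a)) := by field_simp; norm_num
  have e3 : 12 * π^3/(a:ℝ)^3 = 12 * (π/a)^3 := by field_simp
  rw [e1, e2] at h2
  rw [e3, abs_le]
  constructor <;> linarith [h1.1, h1.2, h2.1, h2.2]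
end

section
/- (Growth of the cubic interaction coefficients) For all i, j, m ∈ ℕ, |∫₀^{π/2} e_i(x)·e_j(x)·e_m(x)·tan²(x) dx| ≤ (2/√π)·ω_i and |∫₀^{π/2} e_i(x)·(e_j'(x)/ω_j)·(e_m'(x)/ω_m)·tan²(x) dx| ≤ (2/√π)·ω_i; i.e. the Fourier constants C_{ij}^{(m)} and C̄_{ij}^{(m)} are O(ω_i). -/
open Real MeasureTheory

theorem aux_omega_ge (j : ℕ) : 3 ≤ ω j := by
  unfold ω; have : (0:ℝ) ≤ j := Nat.cast_nonneg j
  linarith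

theorem aux_sin_le (n : ℕ) (x : ℝ) : |Real.sin (n * x)| ≤ n * |Real.sin x| := by
  induction n with
  | zero => simp
  | succ k ih =>
    have h : ((k + 1 : ℕ) : ℝ) * x = k * x + x := by push_cast; ring
    rw [h, Real.sin_add]
    have h1 : |Real.sin (k * x) * Real.cos x| ≤ |Real.sin (k * x)| := by
      rw [abs_mul]; exact mul_le_of_le_one_right (abs_nonneg _) (Real.abs_cos_le_one x)
    have h2 : |Real.cos (k * x) * Real.sin x| ≤ |Real.sin x| := by
      rw [abs_mul]; exact mul_le_of_le_one_left (abs_nonneg _) (Real.abs_cos_le_one _)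
    have h3 := abs_add_le (Real.sin (k * x) * Real.cos x) (Real.cos (k * x) * Real.sin x)
    push_cast
    linarith

theorem aux_cos_le (n : ℕ) (x : ℝ) :
    |Real.cos ((2 * n + 1) * x)| ≤ (2 * n + 1) * |Real.cos x| := by
  induction n with
  | zero => simp
  | succ k ih =>
    have h : (2 * ((k + 1 : ℕ) : ℝ) + 1) * x = (2 * k + 1) * x + 2 * x := by push_cast; ring
    rw [h, Real.cos_add]
    have h1 : |Real.cos ((2 * k + 1) * x) * Real.cos (2 * x)| ≤ |Real.cos ((2 * k + 1) * x)| := by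
      rw [abs_mul]; exact mul_le_of_le_one_right (abs_nonneg _) (Real.abs_cos_le_one _)
    have h2 : |Real.sin ((2 * k + 1) * x) * Real.sin (2 * x)| ≤ 2 * |Real.cos x| := by
      rw [abs_mul]
      refine (mul_le_of_le_one_left (abs_nonneg _) (Real.abs_sin_le_one _)).trans ?_
      rw [Real.sin_two_mul, abs_mul, abs_mul, abs_two]
      have := mul_le_of_le_one_left (abs_nonneg (Real.cos x)) (Real.abs_sin_le_one x)
      linarith
    have h3 := abs_sub (Real.cos ((2 * k + 1) * x) * Real.cos (2 * x))
      (Real.sin ((2 * k + 1) * x) * Real.sin (2 * x))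
    push_cast
    linarith

theorem aux_sin_omega (j : ℕ) (x : ℝ) : |Real.sin (ω j * x)| ≤ ω j * |Real.sin x| := by
  have := aux_sin_le (2 * j + 3) x
  push_cast at this
  exact this

theorem aux_cos_omega (j : ℕ) (x : ℝ) : |Real.cos (ω j * x)| ≤ ω j * |Real.cos x| := by
  have := aux_cos_le (j + 1) x
  have h : (2 * ((j + 1 : ℕ) : ℝ) + 1) = ω j := by unfold ω; push_cast; ring
  rwa [h] at this

theorem aux_F_le (j : ℕ) (x : ℝ) (hs : 0 < Real.sin x) (hc : 0 < Real.cos x) :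
    |ω j * Real.sin (ω j * x) / Real.tan x - Real.cos (ω j * x)| ≤ ω j ^ 2 - 1 := by
  have hw := aux_omega_ge j
  have h := aux_sin_le (2 * j + 2) x
  have hcast : ((2 * j + 2 : ℕ) : ℝ) = ω j - 1 := by unfold ω; push_cast; ring
  rw [hcast, abs_of_pos hs] at h
  have h1 : Real.sin ((ω j - 1) * x) =
      Real.sin (ω j * x) * Real.cos x - Real.cos (ω j * x) * Real.sin x := by
    rw [sub_mul, one_mul, Real.sin_sub]
  have h2 : ω j * Real.sin (ω j * x) / Real.tan x - Real.cos (ω j * x) =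
      ω j * (Real.sin ((ω j - 1) * x) / Real.sin x) + (ω j - 1) * Real.cos (ω j * x) := by
    rw [h1, Real.tan_eq_sin_div_cos]; field_simp; ring
  have h3 : |Real.sin ((ω j - 1) * x) / Real.sin x| ≤ ω j - 1 := by
    rw [abs_div, abs_of_pos hs, div_le_iff₀ hs]; exact h
  rw [h2]
  refine (abs_add_le _ _).trans ?_
  rw [abs_mul, abs_mul, abs_of_pos (by linarith : 0 < ω j), abs_of_pos (by linarith : 0 < ω j - 1)]
  have := Real.abs_cos_le_one (ω j * x)
  nlinarith

theorem aux_e_le (j : ℕ) (x : ℝ) (hs : 0 < Real.sin x) (hc : 0 < Real.cos x) :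
    |e j x| ≤ (2 / Real.sqrt Real.pi) * ω j := by
  have hw := aux_omega_ge j
  have h := aux_F_le j x hs hc
  have hp : 0 < ω j ^ 2 - 1 := by nlinarith
  have hq : 0 < Real.sqrt (ω j ^ 2 - 1) := Real.sqrt_pos.2 hp
  unfold e
  rw [abs_mul, abs_of_nonneg (by positivity), mul_assoc]
  refine mul_le_mul_of_nonneg_left ?_ (by positivity)
  rw [inv_mul_le_iff₀ hq]
  refine h.trans ?_
  have h1 : Real.sqrt (ω j ^ 2 - 1) ≤ ω j := Real.sqrt_le_iff.2 ⟨by linarith, by linarith⟩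
  have h2 := Real.mul_self_sqrt hp.le
  nlinarith

theorem aux_ftc (f g : ℝ → ℝ) (hc : ContinuousOn f (Set.Icc 0 (Real.pi / 2)))
    (hd : ∀ x ∈ Set.Ioo (0:ℝ) (Real.pi / 2), HasDerivAt f (g x ^ 2) x) :
    IntegrableOn (fun x => g x ^ 2) (Set.Ioo 0 (Real.pi / 2)) ∧
    ∫ x in Set.Ioo (0:ℝ) (Real.pi / 2), g x ^ 2 = f (Real.pi / 2) - f 0 := by
  have hpi : (0:ℝ) ≤ Real.pi / 2 := by positivity
  have hi : IntegrableOn (fun x => g x ^ 2) (Set.Ioc 0 (Real.pi / 2)) :=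
    intervalIntegral.integrableOn_deriv_of_nonneg hc hd (fun x _ => sq_nonneg _)
  refine ⟨hi.mono_set Set.Ioo_subset_Ioc_self, ?_⟩
  rw [← integral_Ioc_eq_integral_Ioo, ← intervalIntegral.integral_of_le hpi]
  exact intervalIntegral.integral_eq_sub_of_hasDerivAt_of_le hpi hc hd
    ((intervalIntegrable_iff_integrableOn_Ioc_of_le hpi).2 hi)

theorem aux_sin_two_pi (j : ℕ) : Real.sin (2 * ω j * (Real.pi / 2)) = 0 := by
  have : 2 * ω j * (Real.pi / 2) = ((2 * j + 3 : ℕ) : ℝ) * Real.pi := by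
    unfold ω; push_cast; ring
  rw [this]; exact Real.sin_nat_mul_pi _

theorem aux_trig (a : ℝ) : Real.sin a ^ 2 = 1 - Real.cos a ^ 2 := by
  have := Real.sin_sq_add_cos_sq a; linarith

theorem aux_normG (j : ℕ) :
    IntegrableOn (fun x => (ω j * Real.sin (ω j * x) - Real.cos (ω j * x) * Real.tan x) ^ 2)
      (Set.Ioo 0 (Real.pi / 2)) ∧
    ∫ x in Set.Ioo (0:ℝ) (Real.pi / 2),
      (ω j * Real.sin (ω j * x) - Real.cos (ω j * x) * Real.tan x) ^ 2
      = (ω j ^ 2 - 1) * (Real.pi / 4) := by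
  have hw := aux_omega_ge j
  have key := aux_ftc (fun x => Real.cos (ω j * x) ^ 2 * Real.tan x + ((ω j ^ 2 - 1) / 2 * x
      - (ω j ^ 2 + 1) / (4 * ω j) * Real.sin (2 * ω j * x)))
    (fun x => ω j * Real.sin (ω j * x) - Real.cos (ω j * x) * Real.tan x) ?_ ?_
  · refine ⟨key.1, key.2.trans ?_⟩
    simp only [aux_sin_two_pi, Real.tan_pi_div_two]
    simp; ring
  · refine ContinuousOn.add ?_ (by fun_prop)
    intro x hx
    apply ContinuousAt.continuousWithinAt
    rcases eq_or_lt_of_le hx.2 with h | h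
    · subst h
      have hb : ∀ y : ℝ, |Real.cos (ω j * y) ^ 2 * Real.tan y| ≤ ω j ^ 2 * |Real.cos y| := by
        intro y
        by_cases hy : Real.cos y = 0
        · simp [Real.tan_eq_sin_div_cos, hy]
        have hy' : 0 < |Real.cos y| := abs_pos.2 hy
        rw [abs_mul, Real.tan_eq_sin_div_cos, abs_div, abs_pow, ← mul_div_assoc,
          div_le_iff₀ hy']
        have h1 := pow_le_pow_left₀ (abs_nonneg _) (aux_cos_omega j y) 2
        have h2 := mul_le_of_le_one_right (sq_nonneg |Real.cos (ω j * y)|) (Real.abs_sin_le_one y)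
        nlinarith
      unfold ContinuousAt
      simp only [Real.tan_pi_div_two, mul_zero]
      refine squeeze_zero_norm hb ?_
      have : Continuous fun y : ℝ => ω j ^ 2 * |Real.cos y| := by fun_prop
      simpa using this.tendsto (Real.pi / 2)
    · have hcx : Real.cos x ≠ 0 :=
        (Real.cos_pos_of_mem_Ioo ⟨by linarith [hx.1, Real.pi_pos], h⟩).ne'
      have h1 : ContinuousAt Real.tan x := Real.continuousAt_tan.2 hcx
      have h2 : ContinuousAt (fun x => Real.cos (ω j * x) ^ 2) x := by fun_prop
      exact h2.mul h1
  · intro x hx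
    have hcx : Real.cos x ≠ 0 :=
        (Real.cos_pos_of_mem_Ioo ⟨by linarith [hx.1, Real.pi_pos], hx.2⟩).ne'
    have h0 : HasDerivAt (fun x => ω j * x) (ω j) x := by
      simpa using (hasDerivAt_id x).const_mul (ω j)
    have h0' : HasDerivAt (fun x => 2 * ω j * x) (2 * ω j) x := by
      simpa using (hasDerivAt_id x).const_mul (2 * ω j)
    have h1 := ((h0.cos.pow 2).mul (Real.hasDerivAt_tan hcx)).add
      (((hasDerivAt_id x).const_mul ((ω j ^ 2 - 1) / 2)).sub
        (h0'.sin.const_mul ((ω j ^ 2 + 1) / (4 * ω j))))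
    refine h1.congr_deriv ?_
    have h2 : Real.cos (2 * ω j * x) = 2 * Real.cos (ω j * x) ^ 2 - 1 := by
      rw [mul_assoc, Real.cos_two_mul]
    have h3 := aux_trig (ω j * x)
    have h4 : 1 / Real.cos x ^ 2 = 1 + Real.tan x ^ 2 := by
      rw [Real.tan_eq_sin_div_cos]; field_simp; linarith [aux_trig x]
    have h5 : (ω j ^ 2 + 1) / (4 * ω j) * (Real.cos (2 * ω j * x) * (2 * ω j)) =
        (ω j ^ 2 + 1) / 2 * (2 * Real.cos (ω j * x) ^ 2 - 1) := by
      rw [h2]; field_simp; ring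
    rw [h4, h5]
    simp
    linear_combination (-ω j ^ 2) * h3

theorem aux_normE (j : ℕ) :
    IntegrableOn (fun x => (ω j * Real.cos (ω j * x) - Real.sin (ω j * x) * Real.cot x) ^ 2)
      (Set.Ioo 0 (Real.pi / 2)) ∧
    ∫ x in Set.Ioo (0:ℝ) (Real.pi / 2),
      (ω j * Real.cos (ω j * x) - Real.sin (ω j * x) * Real.cot x) ^ 2
      = (ω j ^ 2 - 1) * (Real.pi / 4) := by
  have hw := aux_omega_ge j
  have hcot : Real.cot = fun x => Real.cos x / Real.sin x := by
    funext x; exact Real.cot_eq_cos_div_sin x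
  rw [hcot]
  have key := aux_ftc (fun x => -(Real.sin (ω j * x) ^ 2 * (Real.cos x / Real.sin x))
      + ((ω j ^ 2 - 1) / 2 * x
      + (ω j ^ 2 + 1) / (4 * ω j) * Real.sin (2 * ω j * x)))
    (fun x => ω j * Real.cos (ω j * x) - Real.sin (ω j * x) * (Real.cos x / Real.sin x)) ?_ ?_
  · refine ⟨key.1, key.2.trans ?_⟩
    simp only [aux_sin_two_pi]
    simp; ring
  · refine ContinuousOn.add (ContinuousOn.neg ?_) (by fun_prop)
    intro x hx
    apply ContinuousAt.continuousWithinAt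
    rcases eq_or_lt_of_le hx.1 with h | h
    · subst h
      have hb : ∀ y : ℝ, |Real.sin (ω j * y) ^ 2 * (Real.cos y / Real.sin y)|
          ≤ ω j ^ 2 * |Real.sin y| := by
        intro y
        by_cases hy : Real.sin y = 0
        · simp [hy]
        have hy' : 0 < |Real.sin y| := abs_pos.2 hy
        rw [abs_mul, abs_div, abs_pow, ← mul_div_assoc, div_le_iff₀ hy']
        have h1 := pow_le_pow_left₀ (abs_nonneg _) (aux_sin_omega j y) 2
        have h2 := mul_le_of_le_one_right (sq_nonneg |Real.sin (ω j * y)|) (Real.abs_cos_le_one y)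
        nlinarith
      unfold ContinuousAt
      simp only [Real.sin_zero, div_zero, mul_zero]
      refine squeeze_zero_norm hb ?_
      have : Continuous fun y : ℝ => ω j ^ 2 * |Real.sin y| := by fun_prop
      simpa using this.tendsto 0
    · have hcx : Real.sin x ≠ 0 :=
        (Real.sin_pos_of_pos_of_lt_pi h (by linarith [hx.2, Real.pi_pos])).ne'
      have h1 : ContinuousAt (fun x => Real.cos x / Real.sin x) x :=
        Real.continuous_cos.continuousAt.div Real.continuous_sin.continuousAt hcx
      have h2 : ContinuousAt (fun x => Real.sin (ω j * x) ^ 2) x := by fun_prop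
      exact h2.mul h1
  · intro x hx
    have hcx : Real.sin x ≠ 0 :=
        (Real.sin_pos_of_pos_of_lt_pi hx.1 (by linarith [hx.2, Real.pi_pos])).ne'
    have h0 : HasDerivAt (fun x => ω j * x) (ω j) x := by
      simpa using (hasDerivAt_id x).const_mul (ω j)
    have h0' : HasDerivAt (fun x => 2 * ω j * x) (2 * ω j) x := by
      simpa using (hasDerivAt_id x).const_mul (2 * ω j)
    have hct : HasDerivAt (fun x => Real.cos x / Real.sin x)
        (-(1 + (Real.cos x / Real.sin x) ^ 2)) x := by
      refine ((Real.hasDerivAt_cos x).div (Real.hasDerivAt_sin x) hcx).congr_deriv ?_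
      field_simp; ring
    have h1 := ((h0.sin.pow 2).mul hct).neg.add
      (((hasDerivAt_id x).const_mul ((ω j ^ 2 - 1) / 2)).add
        (h0'.sin.const_mul ((ω j ^ 2 + 1) / (4 * ω j))))
    refine h1.congr_deriv ?_
    have h2 : Real.cos (2 * ω j * x) = 2 * Real.cos (ω j * x) ^ 2 - 1 := by
      rw [mul_assoc, Real.cos_two_mul]
    have h3 := aux_trig (ω j * x)
    have h5 : (ω j ^ 2 + 1) / (4 * ω j) * (Real.cos (2 * ω j * x) * (2 * ω j)) =
        (ω j ^ 2 + 1) / 2 * (2 * Real.cos (ω j * x) ^ 2 - 1) := by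
      rw [h2]; field_simp; ring
    rw [h5]
    generalize Real.cos x / Real.sin x = t
    simp
    linear_combination h3

theorem aux_scale (j : ℕ) (g : ℝ → ℝ)
    (h : IntegrableOn (fun x => g x ^ 2) (Set.Ioo 0 (Real.pi / 2)) ∧
      ∫ x in Set.Ioo (0:ℝ) (Real.pi / 2), g x ^ 2 = (ω j ^ 2 - 1) * (Real.pi / 4)) :
    IntegrableOn (fun x => (2 / Real.sqrt Real.pi * (Real.sqrt (ω j ^ 2 - 1))⁻¹ * g x) ^ 2)
      (Set.Ioo 0 (Real.pi / 2)) ∧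
      ∫ x in Set.Ioo (0:ℝ) (Real.pi / 2),
        (2 / Real.sqrt Real.pi * (Real.sqrt (ω j ^ 2 - 1))⁻¹ * g x) ^ 2 = 1 := by
  have hw := aux_omega_ge j
  have hp : 0 < ω j ^ 2 - 1 := by nlinarith
  simp only [mul_pow _ (g _)]
  refine ⟨h.1.const_mul _, ?_⟩
  rw [integral_const_mul, h.2, mul_pow, div_pow, inv_pow, Real.sq_sqrt hp.le,
    Real.sq_sqrt Real.pi_pos.le]
  have := Real.pi_pos.ne'
  have := hp.ne'
  field_simp; norm_num

theorem aux_bound (f P Q a : ℝ → ℝ) (M : ℝ) (hM : 0 ≤ M)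
    (hP : IntegrableOn (fun x => P x ^ 2) (Set.Ioo 0 (Real.pi / 2)) ∧
      ∫ x in Set.Ioo (0:ℝ) (Real.pi / 2), P x ^ 2 = 1)
    (hQ : IntegrableOn (fun x => Q x ^ 2) (Set.Ioo 0 (Real.pi / 2)) ∧
      ∫ x in Set.Ioo (0:ℝ) (Real.pi / 2), Q x ^ 2 = 1)
    (hf : ∀ x ∈ Set.Ioo (0:ℝ) (Real.pi / 2), |a x| ≤ M ∧ f x = a x * (P x * Q x)) :
    |∫ x in Set.Ioo (0:ℝ) (Real.pi / 2), f x| ≤ M := by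
  have hg : IntegrableOn (fun x => M / 2 * (P x ^ 2 + Q x ^ 2)) (Set.Ioo 0 (Real.pi / 2)) :=
    (hP.1.add hQ.1).const_mul _
  have h := norm_integral_le_of_norm_le (f := f) hg ?_
  · rw [integral_const_mul, integral_add hP.1 hQ.1, hP.2, hQ.2] at h
    rw [Real.norm_eq_abs] at h
    linarith
  · refine (ae_restrict_iff' measurableSet_Ioo).2 (Filter.Eventually.of_forall fun x hx => ?_)
    obtain ⟨h1, h2⟩ := hf x hx
    rw [h2, Real.norm_eq_abs, abs_mul, abs_mul]
    have h3 : |P x| * |Q x| ≤ (P x ^ 2 + Q x ^ 2) / 2 := by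
      nlinarith [sq_nonneg (|P x| - |Q x|), sq_abs (P x), sq_abs (Q x)]
    have := mul_le_mul h1 h3 (by positivity) hM
    linarith

/-- Growth of the cubic interaction coefficients: for all `i, j, m ∈ ℕ`,
`|C_{ij}^{(m)}| ≤ (2/√π)·ω_i` and `|C̄_{ij}^{(m)}| ≤ (2/√π)·ω_i`,
i.e. the Fourier constants `C_{ij}^{(m)}` and `C̄_{ij}^{(m)}` are `O(ω_i)`. -/
theorem cubic_interaction_coefficients_growth (i j m : ℕ) :
    |∫ x in Set.Ioo (0 : ℝ) (Real.pi / 2),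
        e i x * e j x * e m x * Real.tan x ^ 2| ≤ (2 / Real.sqrt Real.pi) * ω i ∧
    |∫ x in Set.Ioo (0 : ℝ) (Real.pi / 2),
        e i x * (e' j x / ω j) * (e' m x / ω m) * Real.tan x ^ 2| ≤
      (2 / Real.sqrt Real.pi) * ω i := by
  have hw := aux_omega_ge i
  have hj := aux_omega_ge j
  have hm := aux_omega_ge m
  have hM : 0 ≤ (2 / Real.sqrt Real.pi) * ω i := by positivity
  constructor
  · refine aux_bound _ _ _ (e i) _ hM (aux_scale j _ (aux_normG j)) (aux_scale m _ (aux_normG m)) ?_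
    intro x hx
    have hc : 0 < Real.cos x :=
      Real.cos_pos_of_mem_Ioo ⟨by linarith [hx.1, Real.pi_pos], hx.2⟩
    have hs : 0 < Real.sin x :=
      Real.sin_pos_of_pos_of_lt_pi hx.1 (by linarith [hx.2, Real.pi_pos])
    refine ⟨aux_e_le i x hs hc, ?_⟩
    have ht : 0 < Real.tan x := by rw [Real.tan_eq_sin_div_cos]; positivity
    have key : ∀ k, 2 / Real.sqrt Real.pi * (Real.sqrt (ω k ^ 2 - 1))⁻¹ *
        (ω k * Real.sin (ω k * x) - Real.cos (ω k * x) * Real.tan x) = e k x * Real.tan x := by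
      intro k
      unfold e
      rw [mul_assoc _ (_ - _) (Real.tan x), sub_mul, div_mul_cancel₀ _ ht.ne']
    rw [key, key]; ring
  · refine aux_bound _ _ _ (e i) _ hM (aux_scale j _ (aux_normE j)) (aux_scale m _ (aux_normE m)) ?_
    intro x hx
    have hc : 0 < Real.cos x :=
      Real.cos_pos_of_mem_Ioo ⟨by linarith [hx.1, Real.pi_pos], hx.2⟩
    have hs : 0 < Real.sin x :=
      Real.sin_pos_of_pos_of_lt_pi hx.1 (by linarith [hx.2, Real.pi_pos])
    refine ⟨aux_e_le i x hs hc, ?_⟩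
    have ht : 0 < Real.tan x := by rw [Real.tan_eq_sin_div_cos]; positivity
    have hcot : Real.cot x = 1 / Real.tan x := by
      rw [Real.cot_eq_cos_div_sin, Real.tan_eq_sin_div_cos, one_div_div]
    have key : ∀ k, 2 / Real.sqrt Real.pi * (Real.sqrt (ω k ^ 2 - 1))⁻¹ *
        (ω k * Real.cos (ω k * x) - Real.sin (ω k * x) * Real.cot x)
        = e' k x / ω k * Real.tan x := by
      intro k
      have hk : ω k ≠ 0 := by linarith [aux_omega_ge k]
      have h1 : ω k * Real.cos (ω k * x) - Real.sin (ω k * x) * Real.cot x =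
        (ω k * Real.cos (ω k * x) / Real.tan x - Real.sin (ω k * x) / Real.tan x ^ 2)
          * Real.tan x := by
        rw [hcot]; field_simp
      rw [h1]
      unfold e'
      generalize (ω k * Real.cos (ω k * x) / Real.tan x - Real.sin (ω k * x) / Real.tan x ^ 2) = z
      generalize (Real.sqrt (ω k ^ 2 - 1))⁻¹ = y
      field_simp
    rw [key, key]; ring
end
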